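/- arXiv:0805.1996 — 6 statements merged into one kernel-verified Lean document; each statement's English description precedes it below -/
import Mathlib

section
/- Let n ≥ 1 and let f : [0,1] → ℝ be continuous with f((0,1)) ⊆ (0,∞). Suppose that for all n×n complex matrices A and T such that A is Hermitian with all eigenvalues in (0,1), T*T ≤ 1, and T*AT ≤ A, one has T* f(A) T ≤ f(A). Then for every choice of n points λ₁, …, λₙ ∈ (0,1) there exists a function h : (0,1) → ℝ which is matrix monotone of order k for every k ∈ ℕ (i.e. operator monotone on (0,1)) and satisfies h(λᵢ) = f(λᵢ) for 1 ≤ i ≤ n. -/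
/-!
The interpolant is sought in the cone generated by the operator monotone kernels
`x / ((1 - θ) x + θ)`, `θ ∈ [0, 1]` (`kern_monotone`). After merging and padding, the nodes are `n`
distinct points `λ₀ < λ₁ < ⋯` of `(0, 1)`. The kernel vectors at the nodes form a compact set, so by
Hahn–Banach it suffices that every real functional `c` nonnegative on all of them satisfies
`∑ cᵢ f(λᵢ) ≥ 0` (`dual_nonneg`).

Clearing denominators turns such a `c` into a polynomial `R` of degree at most `n - 1`, nonnegative
on `(-∞, 0]`, with `cᵢ = R(λᵢ) / (λᵢ wᵢ)` and `wᵢ = ∏_{j ≠ i} (λⱼ - λᵢ)`. Since `R` is a sum of terms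
`q²` and `-X q²` (`HalfLineSOS.of_nonneg`) and everything is linear in `R`, one may assume that `R`
is a single such term.

For such `R` the sign of `cᵢ` alternates with `i` and does not depend on `q`, and the number of
indices carrying the sign `+` equals the dimension of the space of admissible `q`. So Lagrange
interpolation through the nodes of sign `+`, followed by evaluation at the nodes of sign `-`, is a
well-defined linear map; suitably rescaled it is a matrix `T`, independent of `q`. With
`A = diag(λᵢ)`, the conditions `T* T ≤ 1` and `T* A T ≤ A` say that `∑ cᵢ ≥ 0` and `∑ cᵢ λᵢ ≥ 0` for
all admissible `q`, which hold because `R` is nonnegative on `(-∞, 0]` (`weighted_sums_nonneg`). The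
conclusion `T* f(A) T ≤ f(A)` of the hypothesis then says `∑ cᵢ f(λᵢ) ≥ 0`
(`sum_sq_nonneg_of_interp`).
-/

open Matrix Set MeasureTheory
open scoped ComplexOrder

/-- `f` is matrix monotone of order `n` on the set `I ⊆ ℝ`: for all `n × n` Hermitian complex
matrices `A, B` with spectra contained in `I`, `A ≤ B` in the Loewner order (i.e. `B - A` is
positive semidefinite) implies `f(A) ≤ f(B)`, where `f(A)` is given by the continuous functional
calculus (applying `f` to the eigenvalues in a spectral decomposition). -/
def MatrixMonotoneOn (n : ℕ) (f : ℝ → ℝ) (I : Set ℝ) : Prop :=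
  ∀ A B : Matrix (Fin n) (Fin n) ℂ, A.IsHermitian → B.IsHermitian →
    spectrum ℝ A ⊆ I → spectrum ℝ B ⊆ I → (B - A).PosSemidef →
    (cfc f B - cfc f A).PosSemidef

/-- `f` is matrix convex of order `n` on the set `I ⊆ ℝ`: for all `n × n` Hermitian complex
matrices `A, B` with spectra contained in `I` and all `l ∈ [0,1]`,
`f(l•A + (1-l)•B) ≤ l•f(A) + (1-l)•f(B)` in the Loewner order. -/
def MatrixConvexOn (n : ℕ) (f : ℝ → ℝ) (I : Set ℝ) : Prop :=
  ∀ A B : Matrix (Fin n) (Fin n) ℂ, A.IsHermitian → B.IsHermitian →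
    spectrum ℝ A ⊆ I → spectrum ℝ B ⊆ I → ∀ l : ℝ, 0 ≤ l → l ≤ 1 →
    (l • cfc f A + (1 - l) • cfc f B - cfc f (l • A + (1 - l) • B)).PosSemidef


/-! ### The kernels and their operator monotonicity -/

open scoped MatrixOrder Matrix.Norms.L2Operator in
/-- Operator antitonicity of the inverse, composed with a functional calculus: `φ(A) ≤ φ(B)` gives
`(1/φ)(B) ≤ (1/φ)(A)` when `φ` is positive on both spectra. -/
theorem cfc_inv_antitone {k : ℕ} {A B : Matrix (Fin k) (Fin k) ℂ} {φ : ℝ → ℝ}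
    (hA : A.IsHermitian) (hB : B.IsHermitian)
    (hφA : ∀ x ∈ spectrum ℝ A, 0 < φ x) (hφB : ∀ x ∈ spectrum ℝ B, 0 < φ x)
    (h : (cfc φ B - cfc φ A).PosSemidef) :
    (cfc (fun x => (φ x)⁻¹) A - cfc (fun x => (φ x)⁻¹) B).PosSemidef := by
  have hcA : ContinuousOn φ (spectrum ℝ A) := (Matrix.finite_real_spectrum).continuousOn φ
  have hcB : ContinuousOn φ (spectrum ℝ B) := (Matrix.finite_real_spectrum).continuousOn φ
  rw [← Matrix.le_iff] at h ⊢
  rw [cfc_inv φ A (fun x hx => (hφA x hx).ne') hcA hA.isSelfAdjoint,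
    cfc_inv φ B (fun x hx => (hφB x hx).ne') hcB hB.isSelfAdjoint]
  refine CStarAlgebra.ringInverse_le_ringInverse h ⟨?_, ?_⟩
  · exact cfc_nonneg fun x hx => (hφA x hx).le
  · exact (isUnit_cfc_iff φ A hcA hA.isSelfAdjoint).2 fun x hx =>
      ne_of_gt (hφA x hx)

/-- The kernel `x / ((1 - θ) x + θ)`, written as `((1 - θ) + θ / x)⁻¹`, for `θ ∈ [0, 1]`. It joins
the constant `1` (at `θ = 0`) to the identity (at `θ = 1`). Up to positive factors these kernels are
the functions `x / (x + s)` with `s ∈ [0, ∞]`, so they span the extreme rays of the cone of positive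
operator monotone functions on `(0, ∞)`, over a compact parameter set. -/
noncomputable def kern (θ : ℝ) (x : ℝ) : ℝ := ((1 - θ) + θ * x⁻¹)⁻¹

theorem kern_den_pos {θ x : ℝ} (hθ : θ ∈ Icc (0:ℝ) 1) (hx : x ∈ Ioo (0:ℝ) 1) :
    0 < (1 - θ) + θ * x⁻¹ := by
  have h1 : 1 ≤ x⁻¹ := (one_le_inv₀ hx.1).2 hx.2.le
  nlinarith [hθ.1, hθ.2]

/-- The kernel arises from the identity by inversion, a nonnegative affine map and another
inversion; two order reversals cancel. -/
theorem kern_monotone {θ : ℝ} (hθ : θ ∈ Icc (0:ℝ) 1) (k : ℕ) :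
    MatrixMonotoneOn k (kern θ) (Ioo (0:ℝ) 1) := by
  intro A B hA hB hsA hsB hAB
  have hid : (cfc (fun x : ℝ => x) B - cfc (fun x : ℝ => x) A).PosSemidef := by
    rwa [cfc_id' ℝ A hA.isSelfAdjoint, cfc_id' ℝ B hB.isSelfAdjoint]
  have hinv := cfc_inv_antitone hA hB (fun x hx => (hsA hx).1) (fun x hx => (hsB hx).1) hid
  have haff : ∀ M : Matrix (Fin k) (Fin k) ℂ, M.IsHermitian →
      cfc (fun x : ℝ => (1 - θ) + θ * x⁻¹) M
        = algebraMap ℝ _ (1 - θ) + θ • cfc (fun x : ℝ => x⁻¹) M := by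
    intro M hM
    have hc : ∀ φ : ℝ → ℝ, ContinuousOn φ (spectrum ℝ M) := fun φ =>
      (Matrix.finite_real_spectrum).continuousOn φ
    rw [cfc_const_add (1 - θ) (fun x : ℝ => θ * x⁻¹) M (hc _) hM.isSelfAdjoint,
      cfc_const_mul θ (fun x : ℝ => x⁻¹) M (hc _)]
  refine cfc_inv_antitone hB hA (fun x hx => kern_den_pos hθ (hsB hx))
    (fun x hx => kern_den_pos hθ (hsA hx)) ?_
  rw [haff A hA, haff B hB, add_sub_add_left_eq_sub, ← smul_sub]
  exact hinv.smul hθ.1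

theorem MatrixMonotoneOn.add_smul {k : ℕ} {g h : ℝ → ℝ} {I : Set ℝ} {a b : ℝ}
    (hg : MatrixMonotoneOn k g I) (hh : MatrixMonotoneOn k h I) (ha : 0 ≤ a) (hb : 0 ≤ b) :
    MatrixMonotoneOn k (fun x => a * g x + b * h x) I := by
  intro A B hA hB hsA hsB hAB
  have hlin : ∀ M : Matrix (Fin k) (Fin k) ℂ, M.IsHermitian →
      cfc (fun x : ℝ => a * g x + b * h x) M = a • cfc g M + b • cfc h M := by
    intro M hM
    have hc : ∀ φ : ℝ → ℝ, ContinuousOn φ (spectrum ℝ M) := fun φ =>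
      (Matrix.finite_real_spectrum).continuousOn φ
    rw [cfc_add M (fun x => a * g x) (fun x => b * h x) (hc _) (hc _),
      cfc_const_mul a g M (hc _), cfc_const_mul b h M (hc _)]
  rw [hlin A hA, hlin B hB, add_sub_add_comm, ← smul_sub, ← smul_sub]
  exact ((hg A B hA hB hsA hsB hAB).smul ha).add ((hh A B hA hB hsA hsB hAB).smul hb)

/-! ### Polynomials nonnegative on the negative half-line -/

open Polynomial in
/-- `HalfLineSOS d p` says that `p` is a finite sum of polynomials `q²` and `-X q²`, each summand
having degree at most `d`. The degree bound concerns the individual summands. -/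
inductive HalfLineSOS : ℕ → ℝ[X] → Prop
  | add {d : ℕ} {p q : ℝ[X]} : HalfLineSOS d p → HalfLineSOS d q → HalfLineSOS d (p + q)
  | sq {d : ℕ} (q : ℝ[X]) : 2 * q.natDegree ≤ d → HalfLineSOS d (q ^ 2)
  | xsq {d : ℕ} (q : ℝ[X]) : 2 * q.natDegree + 1 ≤ d → HalfLineSOS d (-X * q ^ 2)

namespace HalfLineSOS
open Polynomial

theorem mono {d e : ℕ} {p : ℝ[X]} (h : HalfLineSOS d p) (hde : d ≤ e) : HalfLineSOS e p := by
  induction h with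
  | add _ _ h₁ h₂ => exact h₁.add h₂
  | sq q h => exact .sq q (h.trans hde)
  | xsq q h => exact .xsq q (h.trans hde)

theorem sq_mul {d m : ℕ} {p : ℝ[X]} (h : HalfLineSOS d p) (r : ℝ[X]) (hr : r.natDegree ≤ m) :
    HalfLineSOS (d + 2 * m) (r ^ 2 * p) := by
  induction h with
  | add _ _ h₁ h₂ => rw [mul_add]; exact h₁.add h₂
  | sq q h =>
    rw [← mul_pow]
    have := natDegree_mul_le (p := r) (q := q)
    exact .sq _ (by omega)
  | xsq q h =>
    have := natDegree_mul_le (p := r) (q := q)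
    rw [show r ^ 2 * (-X * q ^ 2) = -X * (r * q) ^ 2 by ring]
    exact .xsq _ (by omega)

theorem const_mul {d : ℕ} {p : ℝ[X]} (h : HalfLineSOS d p) {c : ℝ} (hc : 0 ≤ c) :
    HalfLineSOS d (C c * p) := by
  have := h.sq_mul (m := 0) (C (√c)) (by simp)
  rwa [← C_pow, Real.sq_sqrt hc] at this

theorem neg_X_mul {d : ℕ} {p : ℝ[X]} (h : HalfLineSOS d p) : HalfLineSOS (d + 1) (-X * p) := by
  induction h with
  | add _ _ h₁ h₂ => rw [mul_add]; exact h₁.add h₂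
  | sq q h => exact .xsq _ (by omega)
  | xsq q h =>
    have := natDegree_mul_le (p := X) (q := q)
    rw [natDegree_X] at this
    rw [show -X * (-X * q ^ 2) = (X * q) ^ 2 by ring]
    exact .sq _ (by omega)

/-- A real polynomial nonnegative on `(-∞, 0]` is a sum of terms `q²` and `-X q²` whose degrees do
not exceed that of the polynomial. Induction on the degree, splitting off a factor: `r - X` for a
root `r ≥ 0`, `(X - r)²` for a root `r < 0` (which is necessarily multiple), or the real quadratic
of a pair of non-real roots. Multiplication by each such factor preserves the representation. -/
theorem of_nonneg (d : ℕ) : ∀ p : ℝ[X], p.natDegree ≤ d → (∀ x ≤ 0, 0 ≤ p.eval x) →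
    HalfLineSOS d p := by
  induction d using Nat.strong_induction_on with
  | _ d ih =>
  intro p hpd hp
  -- by continuity, nonnegativity on `(-∞, 0]` may be checked away from a single point `r`
  have ext : ∀ (q : ℝ[X]) (r : ℝ), (∀ x ≤ 0, x ≠ r → 0 ≤ q.eval x) → ∀ x ≤ 0, 0 ≤ q.eval x := by
    intro q r hq x hx
    by_contra! hneg
    have hev : ∀ᶠ y in nhdsWithin x (Iio x), q.eval y < 0 :=
      (q.continuous.continuousAt.eventually_lt continuousAt_const hneg).filter_mono
        nhdsWithin_le_nhds
    have hne : ∀ᶠ y in nhdsWithin x (Iio x), y ≠ r := by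
      rcases eq_or_ne x r with rfl | h
      · filter_upwards [self_mem_nhdsWithin] with y hy using ne_of_lt hy
      · exact (eventually_ne_nhds h).filter_mono nhdsWithin_le_nhds
    obtain ⟨y, hy1, hy2, hy3⟩ := (hev.and (hne.and self_mem_nhdsWithin)).exists
    exact absurd (hq y (le_of_lt (lt_of_lt_of_le hy3 hx)) hy2) (not_le.2 hy1)
  rcases Nat.eq_zero_or_pos p.natDegree with h0 | hpos
  · rw [eq_C_of_natDegree_eq_zero h0]
    have h1 : HalfLineSOS d (1 ^ 2) := .sq 1 (by simp)
    have h2 := h1.const_mul (c := p.coeff 0) (by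
      have := hp 0 le_rfl
      rwa [← coeff_zero_eq_eval_zero] at this)
    simpa using h2
  have hp0 : p ≠ 0 := by rintro rfl; simp at hpos
  by_cases hroot : ∃ r, p.IsRoot r
  · obtain ⟨r, hr⟩ := hroot
    obtain ⟨q, rfl⟩ := dvd_iff_isRoot.2 hr
    have hq0 : q ≠ 0 := right_ne_zero_of_mul hp0
    have hdeg : ((X - C r) * q).natDegree = 1 + q.natDegree := by
      rw [natDegree_mul (X_sub_C_ne_zero r) hq0, natDegree_X_sub_C]
    rcases le_or_gt 0 r with hr0 | hr0
    · have hq := ih (d - 1) (by omega) (-q) (by rw [natDegree_neg]; omega) (ext _ 0 (by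
        intro x hx hx0
        have hx' := lt_of_le_of_ne hx hx0
        have := hp x hx
        simp only [eval_mul, eval_sub, eval_X, eval_C, eval_neg] at this ⊢
        nlinarith))
      have := hq.neg_X_mul.add ((hq.const_mul hr0).mono (Nat.le_succ _))
      rw [Nat.sub_add_cancel (by omega)] at this
      convert this using 1
      ring
    · have hqr : q.eval r = 0 := by
        refine le_antisymm ?_ ?_
        · by_contra! hneg
          have hev : ∀ᶠ y in nhdsWithin r (Iio r), 0 < q.eval y :=
            (continuousAt_const.eventually_lt q.continuous.continuousAt hneg).filter_mono
              nhdsWithin_le_nhds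
          obtain ⟨y, hy1, hy2⟩ := (hev.and self_mem_nhdsWithin).exists
          have hy2 : y < r := hy2
          have := hp y (by linarith)
          simp only [eval_mul, eval_sub, eval_X, eval_C] at this
          nlinarith
        · by_contra! hneg
          have hev : ∀ᶠ y in nhdsWithin r (Ioi r), q.eval y < 0 :=
            (q.continuous.continuousAt.eventually_lt continuousAt_const hneg).filter_mono
              nhdsWithin_le_nhds
          have hlt : ∀ᶠ y in nhdsWithin r (Ioi r), y < 0 :=
            (eventually_lt_nhds hr0).filter_mono nhdsWithin_le_nhds
          obtain ⟨y, hy1, hy3, hy2⟩ := (hev.and (hlt.and self_mem_nhdsWithin)).exists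
          have hy2 : r < y := hy2
          have := hp y hy3.le
          simp only [eval_mul, eval_sub, eval_X, eval_C] at this
          nlinarith
      obtain ⟨s, rfl⟩ := dvd_iff_isRoot.2 (show q.IsRoot r from hqr)
      have hs0 : s ≠ 0 := right_ne_zero_of_mul hq0
      have hdeg2 : ((X - C r) * s).natDegree = 1 + s.natDegree := by
        rw [natDegree_mul (X_sub_C_ne_zero r) hs0, natDegree_X_sub_C]
      have hs := ih (d - 2) (by omega) s (by omega) (ext _ r (by
        intro x hx hxr
        have := hp x hx
        simp only [eval_mul, eval_sub, eval_X, eval_C] at this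
        rw [← mul_assoc] at this
        exact nonneg_of_mul_nonneg_right this (mul_self_pos.2 (sub_ne_zero.2 hxr))))
      have := hs.sq_mul (m := 1) (X - C r) (by simp)
      rw [show d - 2 + 2 * 1 = d by omega] at this
      convert this using 1
      ring
  · obtain ⟨z, hz⟩ := Complex.exists_root (f := p.map (algebraMap ℝ ℂ)) (by
      rw [degree_map]; exact natDegree_pos_iff_degree_pos.1 hpos)
    have hz' : aeval z p = 0 := by rwa [IsRoot, eval_map_algebraMap] at hz
    have him : z.im ≠ 0 := by
      intro him
      refine hroot ⟨z.re, ?_⟩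
      have hzr : z = algebraMap ℝ ℂ z.re := by
        apply Complex.ext <;> simp [him]
      rw [hzr, aeval_algebraMap_apply] at hz'
      simpa using hz'
    obtain ⟨q, hq⟩ := p.quadratic_dvd_of_aeval_eq_zero_im_ne_zero hz' him
    have hnorm : ‖z‖ ^ 2 = z.re ^ 2 + z.im ^ 2 := by
      rw [← Complex.normSq_eq_norm_sq, Complex.normSq_apply]; ring
    rw [hnorm] at hq
    have hq0 : q ≠ 0 := by rintro rfl; exact hp0 (by simpa using hq)
    have hquad : (X ^ 2 - C (2 * z.re) * X + C (z.re ^ 2 + z.im ^ 2) : ℝ[X]).natDegree = 2 := by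
      compute_degree!
    have hquad0 : (X ^ 2 - C (2 * z.re) * X + C (z.re ^ 2 + z.im ^ 2) : ℝ[X]) ≠ 0 := by
      intro h; rw [h] at hquad; simp at hquad
    have hdeg : p.natDegree = 2 + q.natDegree := by
      rw [hq, natDegree_mul hquad0 hq0, hquad]
    have him2 : 0 < z.im ^ 2 := by positivity
    have hqs := ih (d - 2) (by omega) q (by omega) (by
      intro x hx
      have := hp x hx
      rw [hq] at this
      simp only [eval_mul, eval_add, eval_sub, eval_pow, eval_X, eval_C] at this
      exact nonneg_of_mul_nonneg_right this (by nlinarith [sq_nonneg (x - z.re)]))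
    -- the quadratic factor is `(X² + |z|²) + (2 Re z)(-X)` if `Re z ≥ 0`, and
    -- `(X - Re z)² + (Im z)²` in any case
    rcases le_or_gt 0 z.re with hre | hre
    · have h1 := hqs.sq_mul (m := 1) X (by simp)
      have h2 := (hqs.const_mul (c := 2 * z.re) (by linarith)).neg_X_mul
      have h3 := hqs.const_mul (c := z.re ^ 2 + z.im ^ 2) (by positivity)
      have := (h1.add (h2.mono (by omega))).add (h3.mono (by omega))
      rw [show d - 2 + 2 * 1 = d by omega] at this
      convert this using 1
      rw [hq]; ring
    · have h1 := hqs.sq_mul (m := 1) (X - C z.re) (by simp)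
      have h3 := hqs.const_mul him2.le
      have := h1.add (h3.mono (by omega))
      rw [show d - 2 + 2 * 1 = d by omega] at this
      convert this using 1
      rw [hq]
      simp only [C_add, C_mul, C_pow, map_ofNat]
      ring

end HalfLineSOS

/-! ### The matrix inequality tested on an interpolation matrix -/

theorem spectrum_diagonal_ofReal {n : ℕ} (d : Fin n → ℝ) :
    spectrum ℝ (diagonal fun i => (d i : ℂ)) = range d := by
  ext r
  rw [← spectrum.algebraMap_mem_iff ℂ, spectrum_diagonal]
  simp

theorem cfc_diagonal_ofReal {n : ℕ} (d : Fin n → ℝ) (hd : Function.Injective d) (f : ℝ → ℝ) :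
    cfc f (diagonal fun i => (d i : ℂ)) = diagonal fun i => (f (d i) : ℂ) := by
  have hH : (diagonal fun i => (d i : ℂ)).IsHermitian :=
    isHermitian_diagonal_of_self_adjoint _ (by ext i; simp)
  set p : Polynomial ℝ := Lagrange.interpolate Finset.univ d (fun i => f (d i)) with hp
  have hpe : ∀ i, p.eval (d i) = f (d i) := fun i =>
    Lagrange.eval_interpolate_at_node _ hd.injOn (Finset.mem_univ i)
  have h1 : cfc f (diagonal fun i => (d i : ℂ)) = cfc p.eval (diagonal fun i => (d i : ℂ)) := by
    refine cfc_congr fun x hx => ?_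
    rw [spectrum_diagonal_ofReal] at hx
    obtain ⟨i, rfl⟩ := hx
    exact (hpe i).symm
  rw [h1, cfc_polynomial p _ hH.isSelfAdjoint]
  have h2 := Polynomial.aeval_algHom_apply (diagonalAlgHom (n := Fin n) (α := ℂ) ℝ)
    (fun i => (d i : ℂ)) p
  simp only [diagonalAlgHom_apply] at h2
  rw [h2]
  congr 1
  ext i
  rw [Polynomial.aeval_pi_apply, ← hpe i]
  exact Polynomial.aeval_algebraMap_apply ℂ (d i) p

/-- With `D` and `T` real, the form of `D - T* D T` at a complex vector is the sum of its values at
the real and imaginary parts. -/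
theorem quadForm_ofReal {n : ℕ} (D : Fin n → ℝ) (T : Matrix (Fin n) (Fin n) ℝ) (x : Fin n → ℂ) :
    star x ⬝ᵥ ((diagonal (fun i => (D i : ℂ)) -
        (T.map Complex.ofReal)ᴴ * diagonal (fun i => (D i : ℂ)) * T.map Complex.ofReal) *ᵥ x) =
      (((∑ i, D i * (x i).re ^ 2 - ∑ i, D i * (T *ᵥ fun j => (x j).re) i ^ 2) +
        (∑ i, D i * (x i).im ^ 2 - ∑ i, D i * (T *ᵥ fun j => (x j).im) i ^ 2) : ℝ) : ℂ) := by
  have hdiag : ∀ y : Fin n → ℂ, star y ⬝ᵥ (diagonal (fun i => (D i : ℂ)) *ᵥ y) =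
      ((∑ i, D i * (y i).re ^ 2 + ∑ i, D i * (y i).im ^ 2 : ℝ) : ℂ) := by
    intro y
    simp only [dotProduct, mulVec_diagonal, Pi.star_apply]
    rw [← Finset.sum_add_distrib, Complex.ofReal_sum]
    refine Finset.sum_congr rfl fun i _ => ?_
    apply Complex.ext <;> simp [pow_two] <;> ring
  have hre : ∀ i, ((T.map Complex.ofReal *ᵥ x) i).re = (T *ᵥ fun j => (x j).re) i := by
    intro i; simp [mulVec, dotProduct, Complex.re_sum]
  have him : ∀ i, ((T.map Complex.ofReal *ᵥ x) i).im = (T *ᵥ fun j => (x j).im) i := by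
    intro i; simp [mulVec, dotProduct, Complex.im_sum]
  have hT : star x ⬝ᵥ (((T.map Complex.ofReal)ᴴ * diagonal (fun i => (D i : ℂ)) *
      T.map Complex.ofReal) *ᵥ x) = star (T.map Complex.ofReal *ᵥ x) ⬝ᵥ
        (diagonal (fun i => (D i : ℂ)) *ᵥ (T.map Complex.ofReal *ᵥ x)) := by
    rw [star_mulVec, ← dotProduct_mulVec, mulVec_mulVec, mulVec_mulVec, mul_assoc]
  rw [sub_mulVec, dotProduct_sub, hT, hdiag, hdiag]
  simp only [hre, him]
  push_cast
  ring

/-- For real diagonal `D` and real `T`, positivity of `D - T* D T` over `ℂ` may be tested on real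
vectors. -/
theorem posSemidef_ofReal_iff {n : ℕ} (D : Fin n → ℝ) (T : Matrix (Fin n) (Fin n) ℝ) :
    (diagonal (fun i => (D i : ℂ)) -
        (T.map Complex.ofReal)ᴴ * diagonal (fun i => (D i : ℂ)) * T.map Complex.ofReal).PosSemidef ↔
      ∀ u : Fin n → ℝ, 0 ≤ ∑ i, D i * u i ^ 2 - ∑ i, D i * (T *ᵥ u) i ^ 2 := by
  have hH : (diagonal fun i => (D i : ℂ)).IsHermitian :=
    isHermitian_diagonal_of_self_adjoint _ (by ext i; simp)
  constructor
  · intro h u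
    have h1 := h.dotProduct_mulVec_nonneg (fun i => (u i : ℂ))
    rw [quadForm_ofReal] at h1
    have h2 := Complex.zero_le_real.1 h1
    have h0 : (T *ᵥ fun _ => (0:ℝ)) = 0 := mulVec_zero T
    simpa [h0] using h2
  · intro h
    refine PosSemidef.of_dotProduct_mulVec_nonneg
      (hH.sub (isHermitian_conjTranspose_mul_mul _ hH)) fun x => ?_
    rw [quadForm_ofReal]
    exact Complex.zero_le_real.2 (add_nonneg (h _) (h _))

open Polynomial in
/-- Let the weights `v` be positive on the index set `P` and nonpositive off it.
Polynomials `q` of degree less than `#P` are determined by their values at the nodes in `P`,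
so there is a linear map `T` sending `(√vⱼ q(λⱼ))` for `j ∈ P` to `(√(-vᵢ) q(λᵢ))` for `i ∉ P`.
For a diagonal weight `D`, the inequality `T* D T ≤ D` on vectors supported in `P` says
`∑ Dᵢ vᵢ q(λᵢ)² ≥ 0` for all such `q`. Hence if this holds for the weights `1` and `λ`, the matrix
hypothesis transfers it to the weights `f(λ)`. -/
theorem sum_sq_nonneg_of_interp {n : ℕ} {f : ℝ → ℝ}
    (hineq : ∀ A T : Matrix (Fin n) (Fin n) ℂ, A.IsHermitian →
      spectrum ℝ A ⊆ Ioo (0:ℝ) 1 →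
      (1 - Tᴴ * T).PosSemidef →
      (A - Tᴴ * A * T).PosSemidef →
      (cfc f A - Tᴴ * cfc f A * T).PosSemidef)
    {lam : Fin n → ℝ} (hinj : Function.Injective lam) (hlam : ∀ i, lam i ∈ Ioo (0:ℝ) 1)
    (v : Fin n → ℝ) (P : Finset (Fin n)) (hvP : ∀ i ∈ P, 0 < v i) (hvN : ∀ i ∉ P, v i ≤ 0)
    (h0 : ∀ q : ℝ[X], q.degree < P.card → 0 ≤ ∑ i, v i * q.eval (lam i) ^ 2)
    (h1 : ∀ q : ℝ[X], q.degree < P.card → 0 ≤ ∑ i, lam i * (v i * q.eval (lam i) ^ 2))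
    (q : ℝ[X]) (hq : q.degree < P.card) :
    0 ≤ ∑ i, f (lam i) * (v i * q.eval (lam i) ^ 2) := by
  let T : Matrix (Fin n) (Fin n) ℝ := fun i j =>
    if i ∉ P ∧ j ∈ P then √(-v i) * (Lagrange.basis P lam j).eval (lam i) / √(v j) else 0
  let I : (Fin n → ℝ) → ℝ[X] := fun u => Lagrange.interpolate P lam fun j => u j / √(v j)
  have hI : ∀ u, (I u).degree < P.card := fun u => Lagrange.degree_interpolate_lt _ hinj.injOn
  have hInode : ∀ u, ∀ i ∈ P, v i * (I u).eval (lam i) ^ 2 = u i ^ 2 := by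
    intro u i hi
    have : (I u).eval (lam i) = u i / √(v i) :=
      Lagrange.eval_interpolate_at_node _ hinj.injOn hi
    rw [this, div_pow, Real.sq_sqrt (hvP i hi).le, mul_div_cancel₀ _ (hvP i hi).ne']
  have hTu : ∀ u i, (T *ᵥ u) i ^ 2 = if i ∈ P then 0 else -(v i * (I u).eval (lam i) ^ 2) := by
    intro u i
    split_ifs with hi
    · simp [T, mulVec, dotProduct, hi]
    · have : (T *ᵥ u) i = √(-v i) * (I u).eval (lam i) := by
        simp only [I, Lagrange.interpolate_apply, eval_finsetSum, eval_mul, eval_C, mulVec,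
          dotProduct, T, hi, not_false_eq_true, true_and, ite_mul, zero_mul, Finset.mul_sum]
        rw [← Finset.sum_filter, Finset.filter_mem_eq_inter, Finset.univ_inter]
        exact Finset.sum_congr rfl fun j _ => by ring
      rw [this, mul_pow, Real.sq_sqrt (by linarith [hvN i hi])]
      ring
  -- the form `D - T* D T` is the weighted sum of squares plus a remainder supported off `P`
  have hform : ∀ (D : Fin n → ℝ) (u : Fin n → ℝ),
      ∑ i, D i * u i ^ 2 - ∑ i, D i * (T *ᵥ u) i ^ 2 =
        ∑ i, D i * (v i * (I u).eval (lam i) ^ 2) + ∑ i, if i ∈ P then 0 else D i * u i ^ 2 := by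
    intro D u
    rw [← Finset.sum_sub_distrib, ← Finset.sum_add_distrib]
    refine Finset.sum_congr rfl fun i _ => ?_
    rw [hTu]
    split_ifs with hi
    · rw [hInode u i hi]; ring
    · ring
  have hrem : ∀ (D : Fin n → ℝ) (u : Fin n → ℝ), (∀ i, 0 ≤ D i) →
      0 ≤ ∑ i, if i ∈ P then 0 else D i * u i ^ 2 := by
    intro D u hD
    refine Finset.sum_nonneg fun i _ => ?_
    split_ifs
    · exact le_rfl
    · exact mul_nonneg (hD i) (sq_nonneg _)
  have hH : (diagonal fun i => (lam i : ℂ)).IsHermitian :=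
    isHermitian_diagonal_of_self_adjoint _ (by ext i; simp)
  have hmain := hineq (diagonal fun i => (lam i : ℂ)) (T.map Complex.ofReal) hH
    (by rw [spectrum_diagonal_ofReal]; rintro _ ⟨i, rfl⟩; exact hlam i)
    (by
      have := (posSemidef_ofReal_iff (fun _ => 1) T).2 fun u => by
        rw [hform]
        refine add_nonneg ?_ (hrem _ u fun _ => zero_le_one)
        simpa using h0 (I u) (hI u)
      simpa using this)
    ((posSemidef_ofReal_iff lam T).2 fun u => by
      rw [hform]
      exact add_nonneg (h1 (I u) (hI u)) (hrem _ u fun i => (hlam i).1.le))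
  rw [cfc_diagonal_ofReal lam hinj] at hmain
  have hu := (posSemidef_ofReal_iff (fun i => f (lam i)) T).1 hmain
    (fun j => if j ∈ P then √(v j) * q.eval (lam j) else 0)
  rw [hform] at hu
  have hIq : I (fun j => if j ∈ P then √(v j) * q.eval (lam j) else 0) = q := by
    refine (Lagrange.eq_interpolate_of_eval_eq _ hinj.injOn hq fun j hj => ?_).symm
    have : √(v j) ≠ 0 := (Real.sqrt_pos.2 (hvP j hj)).ne'
    simp only [hj, if_true]
    field_simp
  rw [hIq] at hu
  have hz : ∑ i, (if i ∈ P then 0 else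
      f (lam i) * (if i ∈ P then √(v i) * q.eval (lam i) else 0) ^ 2) = 0 :=
    Finset.sum_eq_zero fun i _ => by split_ifs <;> simp
  rwa [hz, add_zero] at hu

/-! ### Nonnegative polynomials and Lagrange weights -/

/-- The product of the differences `λⱼ - λᵢ` over `j ≠ i`. For increasing nodes its sign is
`(-1)ⁱ` (`nodeWeight_sign`). -/
noncomputable def nodeWeight {n : ℕ} (lam : Fin n → ℝ) (i : Fin n) : ℝ :=
  ∏ j ∈ Finset.univ.erase i, (lam j - lam i)

theorem nodeWeight_sign {n : ℕ} {lam : Fin n → ℝ} (hm : StrictMono lam) (i : Fin n) :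
    0 < (-1) ^ (i : ℕ) * nodeWeight lam i := by
  have hsplit : Finset.univ.erase i = Finset.Iio i ∪ Finset.Ioi i := by
    ext j; simp
  have hdis : Disjoint (Finset.Iio i) (Finset.Ioi i) := by
    rw [Finset.disjoint_left]; intro j; simp only [Finset.mem_Iio, Finset.mem_Ioi]; exact lt_asymm
  have hlow : ∏ j ∈ Finset.Iio i, (lam j - lam i) =
      (-1) ^ (i : ℕ) * ∏ j ∈ Finset.Iio i, (lam i - lam j) := by
    rw [← Fin.card_Iio i, ← Finset.prod_const, ← Finset.prod_mul_distrib]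
    exact Finset.prod_congr rfl fun j _ => by ring
  rw [nodeWeight, hsplit, Finset.prod_union hdis, hlow, ← mul_assoc, ← mul_assoc, ← pow_add,
    Even.neg_one_pow ⟨_, rfl⟩, one_mul]
  refine mul_pos (Finset.prod_pos fun j hj => ?_) (Finset.prod_pos fun j hj => ?_)
  · exact sub_pos.2 (hm (Finset.mem_Iio.1 hj))
  · exact sub_pos.2 (hm (Finset.mem_Ioi.1 hj))

theorem nodeWeight_ne_zero {n : ℕ} {lam : Fin n → ℝ} (hm : StrictMono lam) (i : Fin n) :
    nodeWeight lam i ≠ 0 := right_ne_zero_of_mul (nodeWeight_sign hm i).ne'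

theorem card_even (n : ℕ) :
    (Finset.univ.filter fun i : Fin n => Even (i : ℕ)).card = (n + 1) / 2 := by
  rw [Finset.card_filter, Fin.sum_univ_eq_sum_range (fun k => if Even k then 1 else 0) n]
  induction n with
  | zero => simp
  | succ n ih =>
    rw [Finset.sum_range_succ, ih]
    split_ifs with h
    · rw [Nat.even_iff] at h; omega
    · rw [Nat.even_iff] at h; omega

theorem card_odd (n : ℕ) :
    (Finset.univ.filter fun i : Fin n => ¬ Even (i : ℕ)).card = n / 2 := by
  rw [Finset.card_filter, Fin.sum_univ_eq_sum_range (fun k => if ¬ Even k then 1 else 0) n]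
  induction n with
  | zero => simp
  | succ n ih =>
    rw [Finset.sum_range_succ, ih]
    split_ifs with h
    · rw [Nat.even_iff] at h; omega
    · rw [Nat.even_iff] at h; omega

open Polynomial in
/-- Lagrange interpolation at the nodes, evaluated at `-s`. -/
theorem eval_neg_eq_sum {n : ℕ} {lam : Fin n → ℝ} (hm : StrictMono lam) (hpos : ∀ i, 0 < lam i)
    {R : ℝ[X]} (hR : R.degree < n) {s : ℝ} (hs : 0 ≤ s) :
    R.eval (-s) = (∏ j, (lam j + s)) *
      ∑ i, R.eval (lam i) / ((lam i + s) * nodeWeight lam i) := by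
  have hRI := Lagrange.eq_interpolate (s := Finset.univ) (f := R) hm.injective.injOn
    (by simpa using hR)
  conv_lhs => rw [hRI]
  rw [Lagrange.interpolate_apply, eval_finsetSum, Finset.mul_sum]
  refine Finset.sum_congr rfl fun i _ => ?_
  have hbasis : (Lagrange.basis Finset.univ lam i).eval (-s) =
      (∏ j ∈ Finset.univ.erase i, (lam j + s)) / nodeWeight lam i := by
    rw [Lagrange.basis, eval_prod, nodeWeight, ← Finset.prod_div_distrib]
    refine Finset.prod_congr rfl fun j hj => ?_
    have h1 : lam j - lam i ≠ 0 := sub_ne_zero.2 (hm.injective.ne (Finset.ne_of_mem_erase hj))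
    have h2 : lam i - lam j ≠ 0 := sub_ne_zero.2 (hm.injective.ne (Finset.ne_of_mem_erase hj).symm)
    rw [Lagrange.basisDivisor]
    simp only [eval_mul, eval_C, eval_sub, eval_X]
    field_simp
    ring
  have hw := nodeWeight_ne_zero hm i
  have hi : lam i + s ≠ 0 := (add_pos_of_pos_of_nonneg (hpos i) hs).ne'
  rw [eval_mul, eval_C, hbasis, ← Finset.mul_prod_erase Finset.univ _ (Finset.mem_univ i)]
  field_simp

open Polynomial in
/-- A polynomial of degree less than `n` that is nonnegative on `(-∞, 0]` has nonnegative weighted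
sums. In terms of `cᵢ = R(λᵢ) / (λᵢ wᵢ)` the two sums are `∑ cᵢ` and `∑ cᵢ λᵢ`; they come from
evaluating `R` at `0` and from its behaviour at `-∞`. -/
theorem weighted_sums_nonneg {n : ℕ} {lam : Fin n → ℝ} (hm : StrictMono lam)
    (hpos : ∀ i, 0 < lam i) {R : ℝ[X]} (hR : R.degree < n) (hR0 : ∀ x ≤ 0, 0 ≤ R.eval x) :
    0 ≤ ∑ i, R.eval (lam i) / (lam i * nodeWeight lam i) ∧
      0 ≤ ∑ i, R.eval (lam i) / nodeWeight lam i := by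
  have key : ∀ s : ℝ, 0 ≤ s → 0 ≤ ∑ i, R.eval (lam i) / ((lam i + s) * nodeWeight lam i) := by
    intro s hs
    have h := hR0 (-s) (by linarith)
    rw [eval_neg_eq_sum hm hpos hR hs] at h
    exact nonneg_of_mul_nonneg_right h
      (Finset.prod_pos fun j _ => add_pos_of_pos_of_nonneg (hpos j) hs)
  refine ⟨by simpa using key 0 le_rfl, ?_⟩
  have hlim : Filter.Tendsto (fun s : ℝ => ∑ i, s / (lam i + s) *
      (R.eval (lam i) / nodeWeight lam i)) Filter.atTop
      (nhds (∑ i, 1 * (R.eval (lam i) / nodeWeight lam i))) := by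
    refine tendsto_finsetSum _ fun i _ => Filter.Tendsto.mul_const _ ?_
    have h1 : Filter.Tendsto (fun s : ℝ => 1 - lam i / (lam i + s)) Filter.atTop (nhds (1 - 0)) :=
      tendsto_const_nhds.sub (Filter.Tendsto.div_atTop tendsto_const_nhds
        (Filter.tendsto_atTop_add_const_left _ _ Filter.tendsto_id))
    rw [sub_zero] at h1
    refine h1.congr' ?_
    filter_upwards [Filter.eventually_ge_atTop 0] with s hs
    have : lam i + s ≠ 0 := (add_pos_of_pos_of_nonneg (hpos i) hs).ne'
    field_simp
    ring
  simp only [one_mul] at hlim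
  refine ge_of_tendsto hlim ?_
  filter_upwards [Filter.eventually_ge_atTop 0] with s hs
  have := mul_nonneg hs (key s hs)
  rw [Finset.mul_sum] at this
  convert this using 2 with i
  rw [div_mul_div_comm, mul_div_assoc]

open Polynomial in
/-- The functional `R ↦ ∑ f(λᵢ) R(λᵢ) / (λᵢ wᵢ)` is nonnegative on sums of terms `q²` and `-X q²` of
degree at most `n - 1`. For `q²` the positive weights sit at the even indices, for `-X q²` at the
odd ones; in both cases their number is exactly the dimension of the space of admissible `q`, as
`sum_sq_nonneg_of_interp` requires. -/
theorem sum_nonneg_of_SOS {n : ℕ} (hn : 1 ≤ n) {f : ℝ → ℝ}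
    (hineq : ∀ A T : Matrix (Fin n) (Fin n) ℂ, A.IsHermitian →
      spectrum ℝ A ⊆ Ioo (0:ℝ) 1 →
      (1 - Tᴴ * T).PosSemidef →
      (A - Tᴴ * A * T).PosSemidef →
      (cfc f A - Tᴴ * cfc f A * T).PosSemidef)
    {lam : Fin n → ℝ} (hm : StrictMono lam) (hlam : ∀ i, lam i ∈ Ioo (0:ℝ) 1)
    {R : ℝ[X]} (hR : HalfLineSOS (n - 1) R) :
    0 ≤ ∑ i, f (lam i) * (R.eval (lam i) / (lam i * nodeWeight lam i)) := by
  have hpos : ∀ i, 0 < lam i := fun i => (hlam i).1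
  have hdeg : ∀ (q : ℝ[X]) (m : ℕ), 0 < m → (q.degree < m ↔ q.natDegree < m) := by
    intro q m hm0
    rcases eq_or_ne q 0 with rfl | hq
    · simpa using hm0
    · exact (natDegree_lt_iff_degree_lt hq).symm
  have hEven : ∀ i : Fin n, Even (i : ℕ) → 0 < nodeWeight lam i := by
    intro i hi
    have := nodeWeight_sign hm i
    rwa [hi.neg_one_pow, one_mul] at this
  have hOdd : ∀ i : Fin n, ¬ Even (i : ℕ) → nodeWeight lam i < 0 := by
    intro i hi
    have := nodeWeight_sign hm i
    rw [(Nat.not_even_iff_odd.1 hi).neg_one_pow] at this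
    linarith
  induction hR with
  | add _ _ h₁ h₂ =>
    refine (add_nonneg h₁ h₂).trans_eq ?_
    rw [← Finset.sum_add_distrib]
    exact Finset.sum_congr rfl fun i _ => by rw [eval_add]; ring
  | sq q h =>
    have hsum := fun (q : ℝ[X]) (hq : q.degree <
        (Finset.univ.filter fun i : Fin n => Even (i : ℕ)).card) =>
      weighted_sums_nonneg hm hpos (R := q ^ 2) (by
        rw [card_even, hdeg _ _ (by omega)] at hq
        rw [hdeg _ _ (by omega), natDegree_pow]
        omega) (fun x _ => by rw [eval_pow]; exact sq_nonneg _)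
    have := sum_sq_nonneg_of_interp hineq hm.injective hlam
      (fun i => (lam i * nodeWeight lam i)⁻¹)
      (Finset.univ.filter fun i : Fin n => Even (i : ℕ))
      (fun i hi => inv_pos.2 (mul_pos (hpos i) (hEven i (Finset.mem_filter.1 hi).2)))
      (fun i hi => inv_nonpos.2 (mul_nonpos_of_nonneg_of_nonpos (hpos i).le
        (hOdd i (by simpa using hi)).le))
      (fun q hq => (hsum q hq).1.trans_eq (Finset.sum_congr rfl fun i _ => by
        rw [eval_pow]; ring))
      (fun q hq => (hsum q hq).2.trans_eq (Finset.sum_congr rfl fun i _ => by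
        have := (hpos i).ne'
        rw [eval_pow]; field_simp))
      q (by rw [card_even, hdeg _ _ (by omega)]; omega)
    refine this.trans_eq (Finset.sum_congr rfl fun i _ => ?_)
    rw [eval_pow]; ring
  | xsq q h =>
    have hsum := fun (q : ℝ[X]) (hq : q.degree <
        (Finset.univ.filter fun i : Fin n => ¬ Even (i : ℕ)).card) =>
      weighted_sums_nonneg hm hpos (R := -X * q ^ 2) (by
        rw [card_odd, hdeg _ _ (by omega)] at hq
        rw [hdeg _ _ (by omega)]
        have h1 := natDegree_mul_le (p := -X) (q := q ^ 2)
        rw [natDegree_neg, natDegree_X, natDegree_pow] at h1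
        omega) (fun x hx => by
          rw [eval_mul, eval_neg, eval_X, eval_pow]
          exact mul_nonneg (by linarith) (sq_nonneg _))
    have := sum_sq_nonneg_of_interp hineq hm.injective hlam
      (fun i => -(nodeWeight lam i)⁻¹)
      (Finset.univ.filter fun i : Fin n => ¬ Even (i : ℕ))
      (fun i hi => neg_pos.2 (inv_lt_zero.2 (hOdd i (Finset.mem_filter.1 hi).2)))
      (fun i hi => neg_nonpos.2 (inv_nonneg.2 (hEven i (by simpa using hi)).le))
      (fun q hq => (hsum q hq).1.trans_eq (Finset.sum_congr rfl fun i _ => by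
        have := (hpos i).ne'
        rw [eval_mul, eval_neg, eval_X, eval_pow]; field_simp))
      (fun q hq => (hsum q hq).2.trans_eq (Finset.sum_congr rfl fun i _ => by
        rw [eval_mul, eval_neg, eval_X, eval_pow]; ring))
      q (by rw [card_odd, hdeg _ _ (by omega)]; omega)
    refine this.trans_eq (Finset.sum_congr rfl fun i _ => ?_)
    have := (hpos i).ne'
    rw [eval_mul, eval_neg, eval_X, eval_pow]
    field_simp

/-! ### Duality -/

/-- By Carathéodory's theorem, the hull is a finite union of continuous images of compact sets
`simplex × Kᵐ`, `m ≤ n + 1`. -/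
theorem isCompact_convexHull_of_isCompact {n : ℕ} {K : Set (Fin n → ℝ)} (hK : IsCompact K) :
    IsCompact (convexHull ℝ K) := by
  have himage : convexHull ℝ K = ⋃ m ∈ Iic (n + 1),
      (fun p : (Fin m → ℝ) × (Fin m → Fin n → ℝ) => ∑ i, p.1 i • p.2 i) ''
        (stdSimplex ℝ (Fin m) ×ˢ univ.pi fun _ => K) := by
    apply Subset.antisymm
    · intro x hx
      obtain ⟨ι, _, z, w, hz, hind, hw, hw1, hx⟩ := eq_pos_convex_span_of_mem_convexHull hx
      have hcard : Fintype.card ι ≤ n + 1 := by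
        have := hind.card_le_finrank_succ
        have h2 : Module.finrank ℝ (vectorSpan ℝ (range z)) ≤ n := by
          simpa using Submodule.finrank_le (vectorSpan ℝ (range z))
        omega
      let e := Fintype.equivFin ι
      refine mem_biUnion (mem_Iic.2 hcard) ⟨(w ∘ e.symm, z ∘ e.symm), ⟨⟨fun i => (hw _).le, ?_⟩, ?_⟩, ?_⟩
      · rw [← hw1]; exact e.symm.sum_comp w
      · exact fun i _ => hz ⟨_, rfl⟩
      · rw [← hx]; exact e.symm.sum_comp fun i => w i • z i
    · refine iUnion₂_subset fun m _ => ?_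
      rintro _ ⟨⟨w, z⟩, ⟨⟨hw0, hw1⟩, hz⟩, rfl⟩
      exact (convex_convexHull ℝ K).sum_mem (fun i _ => hw0 i) hw1
        fun i _ => subset_convexHull ℝ K (hz i trivial)
  rw [himage]
  refine (finite_Iic _).isCompact_biUnion fun m _ => ?_
  refine ((isCompact_stdSimplex ℝ (Fin m)).prod (isCompact_univ_pi fun _ => hK)).image ?_
  fun_prop

open Polynomial in
/-- A functional `c` that is nonnegative on all kernels is nonnegative on `f`. Clearing denominators,
nonnegativity of `c` on the kernels is nonnegativity on `(-∞, 0]` of the polynomial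
`R = ∑ cᵢ λᵢ ∏_{j ≠ i} (λⱼ - X)`, from which `cᵢ = R(λᵢ) / (λᵢ wᵢ)` is recovered. -/
theorem dual_nonneg {n : ℕ} (hn : 1 ≤ n) {f : ℝ → ℝ}
    (hineq : ∀ A T : Matrix (Fin n) (Fin n) ℂ, A.IsHermitian →
      spectrum ℝ A ⊆ Ioo (0:ℝ) 1 →
      (1 - Tᴴ * T).PosSemidef →
      (A - Tᴴ * A * T).PosSemidef →
      (cfc f A - Tᴴ * cfc f A * T).PosSemidef)
    {lam : Fin n → ℝ} (hm : StrictMono lam) (hlam : ∀ i, lam i ∈ Ioo (0:ℝ) 1)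
    (c : Fin n → ℝ) (hc : ∀ θ ∈ Icc (0:ℝ) 1, 0 ≤ ∑ i, c i * kern θ (lam i)) :
    0 ≤ ∑ i, c i * f (lam i) := by
  let R : ℝ[X] := ∑ i, C (c i * lam i) * ∏ j ∈ Finset.univ.erase i, (C (lam j) - X)
  have hdeg : R.natDegree ≤ n - 1 := by
    refine natDegree_sum_le_of_forall_le _ _ fun i _ => ?_
    refine (natDegree_C_mul_le _ _).trans ((natDegree_prod_le _ _).trans ?_)
    refine (Finset.sum_le_card_nsmul _ _ 1 fun j _ => ?_).trans ?_
    · compute_degree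
    · simp
  have hnode : ∀ i, R.eval (lam i) = c i * lam i * nodeWeight lam i := by
    intro i
    simp only [R, eval_finsetSum, eval_mul, eval_C, eval_prod, eval_sub, eval_X]
    rw [Finset.sum_eq_single i]
    · rfl
    · intro k _ hki
      rw [Finset.prod_eq_zero (Finset.mem_erase.2 ⟨hki.symm, Finset.mem_univ i⟩) (sub_self _),
        mul_zero]
    · simp
  have hnonneg : ∀ x ≤ 0, 0 ≤ R.eval x := by
    intro x hx
    have hx1 : 0 < 1 - x := by linarith
    have hden : ∀ i, 0 < lam i - x := fun i => by linarith [(hlam i).1]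
    -- `θ = -x / (1 - x)` is the parameter for which the kernel is a multiple of `λ / (λ - x)`
    have hk : ∀ i, kern (-x / (1 - x)) (lam i) = (1 - x) * (lam i / (lam i - x)) := by
      intro i
      have h1 := (hlam i).1.ne'
      have h2 := (hden i).ne'
      have h3 : 1 - -x / (1 - x) + -x / (1 - x) * (lam i)⁻¹ =
          (lam i - x) / ((1 - x) * lam i) := by
        field_simp
        ring
      rw [kern, h3, inv_div, mul_div_assoc]
    have hθ : -x / (1 - x) ∈ Icc (0:ℝ) 1 :=
      ⟨div_nonneg (by linarith) hx1.le, (div_le_one hx1).2 (by linarith)⟩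
    have hsum : R.eval x = (∏ j, (lam j - x)) / (1 - x) *
        ∑ i, c i * kern (-x / (1 - x)) (lam i) := by
      simp only [R, eval_finsetSum, eval_mul, eval_C, eval_prod, eval_sub, eval_X]
      rw [Finset.mul_sum]
      refine Finset.sum_congr rfl fun i _ => ?_
      rw [hk, ← Finset.mul_prod_erase Finset.univ _ (Finset.mem_univ i)]
      have h2 := (hden i).ne'
      field_simp
    rw [hsum]
    exact mul_nonneg (div_nonneg (Finset.prod_nonneg fun j _ => (hden j).le) hx1.le) (hc _ hθ)
  have h := sum_nonneg_of_SOS hn hineq hm hlam (HalfLineSOS.of_nonneg (n - 1) R hdeg hnonneg)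
  refine h.trans_eq (Finset.sum_congr rfl fun i _ => ?_)
  have h1 := (hlam i).1.ne'
  have h2 := nodeWeight_ne_zero hm i
  rw [hnode]
  field_simp

/-- For increasing nodes, a positive multiple of the vector `(f(λᵢ))` lies in the compact convex hull
of the kernel vectors; otherwise the ray it spans could be strictly separated from that hull,
contradicting `dual_nonneg`. -/
theorem exists_interp_strictMono {n : ℕ} (hn : 1 ≤ n) {f : ℝ → ℝ}
    (hfpos : f '' Ioo (0:ℝ) 1 ⊆ Ioi (0:ℝ))
    (hineq : ∀ A T : Matrix (Fin n) (Fin n) ℂ, A.IsHermitian →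
      spectrum ℝ A ⊆ Ioo (0:ℝ) 1 →
      (1 - Tᴴ * T).PosSemidef →
      (A - Tᴴ * A * T).PosSemidef →
      (cfc f A - Tᴴ * cfc f A * T).PosSemidef)
    {lam : Fin n → ℝ} (hm : StrictMono lam) (hlam : ∀ i, lam i ∈ Ioo (0:ℝ) 1) :
    ∃ h : ℝ → ℝ, (∀ k : ℕ, MatrixMonotoneOn k h (Ioo (0:ℝ) 1)) ∧
      ∀ i, h (lam i) = f (lam i) := by
  let V : ℝ → Fin n → ℝ := fun θ i => kern θ (lam i)
  let F : Fin n → ℝ := fun i => f (lam i)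
  have hF : ∀ i, 0 < F i := fun i => hfpos ⟨_, hlam i, rfl⟩
  let i₀ : Fin n := ⟨0, hn⟩
  have hVcont : ContinuousOn V (Icc 0 1) := by
    refine continuousOn_pi.2 fun i => ContinuousOn.inv₀ (by fun_prop) fun θ hθ => ?_
    exact (kern_den_pos hθ (hlam i)).ne'
  have hVpos : ∀ θ ∈ Icc (0:ℝ) 1, ∀ i, 0 < V θ i := fun θ hθ i =>
    inv_pos.2 (kern_den_pos hθ (hlam i))
  have hVle : ∀ θ ∈ Icc (0:ℝ) 1, ∀ i, V θ i ≤ 1 := by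
    intro θ hθ i
    refine inv_le_one_of_one_le₀ ?_
    have h1 : 1 ≤ (lam i)⁻¹ := (one_le_inv₀ (hlam i).1).2 (hlam i).2.le
    nlinarith [hθ.1]
  have hKc : IsCompact (convexHull ℝ (V '' Icc 0 1)) :=
    isCompact_convexHull_of_isCompact (isCompact_Icc.image_of_continuousOn hVcont)
  have hF0 : F ≠ 0 := fun h => (hF i₀).ne' (congrFun h i₀)
  have hRconv : Convex ℝ ((fun r : ℝ => r • F) '' Ici 0) :=
    (convex_Ici 0).linear_image (LinearMap.toSpanSingleton ℝ _ F)
  have hRclosed : IsClosed ((fun r : ℝ => r • F) '' Ici 0) :=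
    (isClosedEmbedding_smul_left hF0).isClosedMap _ isClosed_Ici
  have hnd : ¬ Disjoint (convexHull ℝ (V '' Icc 0 1)) ((fun r : ℝ => r • F) '' Ici 0) := by
    intro hd
    obtain ⟨φ, u, v, hu, huv, hv⟩ :=
      geometric_hahn_banach_compact_closed (convex_convexHull ℝ _) hKc hRconv hRclosed hd
    have hv0 : v < 0 := by simpa using hv 0 ⟨0, mem_Ici.2 le_rfl, zero_smul _ _⟩
    have hφF : 0 ≤ φ F := by
      by_contra! hneg
      have h1 := hv ((v / φ F) • F) ⟨v / φ F, (div_pos_of_neg_of_neg hv0 hneg).le, rfl⟩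
      rw [map_smul, smul_eq_mul, div_mul_cancel₀ _ hneg.ne] at h1
      exact lt_irrefl _ h1
    have hφsum : ∀ x : Fin n → ℝ, φ x = ∑ i, φ (Pi.single i 1) * x i := by
      intro x
      conv_lhs => rw [pi_eq_sum_univ' x]
      rw [map_sum]
      refine Finset.sum_congr rfl fun i _ => ?_
      rw [map_smul, smul_eq_mul, mul_comm]
    -- `-φ` may vanish on `F`, so it is perturbed: as kernels are at most `1` and `φ < v < 0` on
    -- them, `-φ + v e₀` is still nonnegative on the kernels, while it is negative on `F`
    have hcsum : ∀ x : Fin n → ℝ,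
        ∑ i, (-φ (Pi.single i 1) + if i = i₀ then v else 0) * x i = -φ x + v * x i₀ := by
      intro x
      rw [hφsum x]
      simp [add_mul, Finset.sum_add_distrib]
    have hdual := dual_nonneg hn hineq hm hlam
      (fun i => -φ (Pi.single i 1) + if i = i₀ then v else 0) (by
        intro θ hθ
        refine le_of_le_of_eq ?_ (hcsum (V θ)).symm
        have h1 := hu (V θ) (subset_convexHull ℝ _ ⟨θ, hθ, rfl⟩)
        have h2 := hVle θ hθ i₀
        nlinarith)
    have h3 : 0 ≤ -φ F + v * F i₀ := hdual.trans_eq (hcsum F)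
    nlinarith [mul_neg_of_neg_of_pos hv0 (hF i₀)]
  obtain ⟨x, hx, r, hr, hrx⟩ := not_disjoint_iff.1 hnd
  have hsub : convexHull ℝ (V '' Icc 0 1) ⊆ {x | (∀ i, 0 < x i) ∧ ∃ h : ℝ → ℝ,
      (∀ k : ℕ, MatrixMonotoneOn k h (Ioo (0:ℝ) 1)) ∧ ∀ i, h (lam i) = x i} := by
    refine convexHull_min ?_ ?_
    · rintro _ ⟨θ, hθ, rfl⟩
      exact ⟨hVpos θ hθ, kern θ, kern_monotone hθ, fun i => rfl⟩
    · rintro x ⟨hx, g, hg, hgx⟩ y ⟨hy, h, hh, hhy⟩ a b ha hb hab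
      refine ⟨fun i => ?_, fun t => a * g t + b * h t, fun k => (hg k).add_smul (hh k) ha hb,
        fun i => by simp [hgx, hhy]⟩
      rcases ha.eq_or_lt with rfl | ha
      · have : b = 1 := by linarith
        simp [this, hy i]
      · exact add_pos_of_pos_of_nonneg (mul_pos ha (hx i)) (mul_nonneg hb (hy i).le)
  obtain ⟨hxpos, h, hh, hhx⟩ := hsub hx
  have hr0 : r ≠ 0 := by
    rintro rfl
    have := hxpos i₀
    rw [← hrx] at this
    simp at this
  refine ⟨fun t => r⁻¹ * h t + 0 * h t,
    fun k => (hh k).add_smul (hh k) (inv_nonneg.2 hr) le_rfl, fun i => ?_⟩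
  change r⁻¹ * h (lam i) + 0 * h (lam i) = F i
  rw [hhx, ← hrx]
  simp [hr0]


/-- Theorem 2.2, (3) ⇒ (1): if `f` satisfies the matrix inequality (3), then every `n` points of
`(0,1)` admit an operator monotone interpolant of `f`, i.e. `f ∈ Cₙ([0,1])`. -/
theorem stmt_1 (n : ℕ) (hn : 1 ≤ n) (f : ℝ → ℝ)
    (hfc : ContinuousOn f (Icc (0:ℝ) 1))
    (hfpos : f '' Ioo (0:ℝ) 1 ⊆ Ioi (0:ℝ))
    (hineq : ∀ A T : Matrix (Fin n) (Fin n) ℂ, A.IsHermitian →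
      spectrum ℝ A ⊆ Ioo (0:ℝ) 1 →
      (1 - Tᴴ * T).PosSemidef →
      (A - Tᴴ * A * T).PosSemidef →
      (cfc f A - Tᴴ * cfc f A * T).PosSemidef) :
    ∀ lam : Fin n → ℝ, (∀ i, lam i ∈ Ioo (0:ℝ) 1) →
      ∃ h : ℝ → ℝ, (∀ k : ℕ, MatrixMonotoneOn k h (Ioo (0:ℝ) 1)) ∧
        ∀ i, h (lam i) = f (lam i) := by
  intro lam hlam
  -- repeated nodes are merged, and the node set is then padded to exactly `n` distinct nodes
  obtain ⟨S, hS, hSI, hcard⟩ := (Ioo_infinite (zero_lt_one (α := ℝ))).exists_superset_ncard_eq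
    (range_subset_iff.2 hlam) (finite_range lam) (k := n) (by
      rw [← Nat.card_coe_set_eq]
      simpa using Finite.card_range_le lam)
  have hfin : S.Finite := finite_of_ncard_pos (by omega)
  have hcard' : hfin.toFinset.card = n := by rw [← ncard_eq_toFinset_card S hfin, hcard]
  let μ := hfin.toFinset.orderEmbOfFin hcard'
  obtain ⟨h, hh, hμ⟩ := exists_interp_strictMono hn hfpos hineq μ.strictMono fun i =>
    hSI (hfin.mem_toFinset.1 (Finset.orderEmbOfFin_mem _ hcard' i))
  refine ⟨h, hh, fun i => ?_⟩
  have : lam i ∈ range μ := by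
    rw [Finset.range_orderEmbOfFin, Finite.coe_toFinset]
    exact hS ⟨i, rfl⟩
  obtain ⟨j, hj⟩ := this
  rw [← hj, hμ]
end

section
/- Let n ≥ 1, let f : [0,1] → ℝ be continuous with f((0,1)) ⊆ (0,∞), and fix points λ₁, …, λₙ ∈ (0,1). Suppose that for all real numbers a₁, …, aₙ, whenever Σᵢ₌₁ⁿ aᵢ·(1+t)λᵢ/(1+(t−1)λᵢ) ≥ 0 for all t ∈ [0,∞), it follows that Σᵢ₌₁ⁿ aᵢ f(λᵢ) ≥ 0. Then there exist a finite Borel measure ρ on [0,∞) and a constant c ≥ 0 such that f(λᵢ) = ∫_{[0,∞)} (1+t)λᵢ/(1+(t−1)λᵢ) dρ(t) + c for each 1 ≤ i ≤ n. (In particular the function h(λ) = ∫_{[0,∞)} (1+t)λ/(1+(t−1)λ) dρ(t) + c is a Pick function on (0,1) interpolating f at λ₁, …, λₙ.) -/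
/-!
With `s = 1 / (1 + t)` the kernel `(1 + t) * l / (1 + (t - 1) * l)` becomes
`pickKernel l s = l / (s * (1 - l) + (1 - s) * l)`, continuous and positive for `s ∈ [0, 1]`, where
`s = 0` corresponds to `t = ∞` and gives the value `1`. So the claim is that the vector
`F = (f (lam i))ᵢ` lies in the convex cone spanned by the compact curve `w s = (pickKernel (lam i) s)ᵢ`.

Both the curve and `F` have positive coordinates, so each can be scaled to have `i₀`-th coordinate
`1`, for a fixed index `i₀`; it then suffices that the scaled `F` lies in the convex hull of the
scaled curve. That hull is compact (Carathéodory, `isCompact_convexHull_of_finiteDimensional`), so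
otherwise a hyperplane `l = r` strictly separates them. The functional `r • e_{i₀} - l` is then
nonnegative on the curve and negative at `F`, contrary to the positivity hypothesis. A convex
combination representing `F` is a finite sum of point masses; those at `s = 0` make up `c`, and
the others the measure `ρ`.
-/

open Matrix Set MeasureTheory
open scoped ComplexOrder

/-- In finite dimension the convex hull of a compact set is compact: by Carathéodory's theorem it
is the image of a simplex times a fixed finite power of the set. -/
theorem isCompact_convexHull_of_finiteDimensional {E : Type*} [NormedAddCommGroup E]
    [NormedSpace ℝ E] [FiniteDimensional ℝ E] {K : Set E} (hK : IsCompact K) :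
    IsCompact (convexHull ℝ K) := by
  rcases K.eq_empty_or_nonempty with rfl | ⟨z₀, hz₀⟩
  · simp
  let N := Module.finrank ℝ E + 1
  let φ : (Fin N → ℝ) × (Fin N → E) → E := fun p => ∑ j, p.1 j • p.2 j
  have hφ : Continuous φ := by fun_prop
  have hcomp : IsCompact (stdSimplex ℝ (Fin N) ×ˢ Set.pi univ (fun _ : Fin N => K)) :=
    (isCompact_stdSimplex ℝ (Fin N)).prod (isCompact_univ_pi fun _ => hK)
  convert hcomp.image hφ
  apply Subset.antisymm
  · intro x hx
    obtain ⟨ι, _, z, w, hz, hind, hw, hw1, hx⟩ := eq_pos_convex_span_of_mem_convexHull hx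
    have hcard : Fintype.card ι ≤ Fintype.card (Fin N) := by
      simpa [N] using hind.card_le_finrank_succ.trans
        (Nat.succ_le_succ (Submodule.finrank_le _))
    obtain ⟨e⟩ := Function.Embedding.nonempty_of_card_le hcard
    -- The Carathéodory family is padded to length `N` with weight-zero copies of `z₀`.
    have hout : ∀ j, j ∉ Set.range e → Function.extend e w 0 j = 0 := fun j hj =>
      Function.extend_apply' _ _ _ hj
    refine ⟨(Function.extend e w 0, Function.extend e z fun _ => z₀), ⟨⟨?_, ?_⟩, ?_⟩, ?_⟩
    · intro j
      by_cases hj : j ∈ Set.range e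
      · obtain ⟨i, rfl⟩ := hj
        simpa [e.injective.extend_apply] using (hw i).le
      · simp [hout j hj]
    · change ∑ j, Function.extend e w 0 j = 1
      rw [Fintype.sum_of_injective e e.injective w _ hout
        (fun i => (e.injective.extend_apply w 0 i).symm)] at hw1
      exact hw1
    · intro j _
      by_cases hj : j ∈ Set.range e
      · obtain ⟨i, rfl⟩ := hj
        simpa [e.injective.extend_apply] using hz ⟨i, rfl⟩
      · simpa [Function.extend_apply' _ _ _ hj] using hz₀
    · rw [← hx]
      refine (Fintype.sum_of_injective e e.injective _ _ ?_ ?_).symm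
      · intro j hj
        simp [hout j hj]
      · intro i
        simp [e.injective.extend_apply]
  · rintro _ ⟨⟨w, z⟩, ⟨⟨hw0, hw1⟩, hz⟩, rfl⟩
    exact mem_convexHull_of_exists_fintype w z hw0 hw1 (fun j => hz j (mem_univ j)) rfl

/-- The kernel of the integral representation in the coordinate `s = 1 / (1 + t) ∈ [0, 1]`. -/
noncomputable def pickKernel (l s : ℝ) : ℝ := l / (s * (1 - l) + (1 - s) * l)

theorem pickKernel_denom_pos {l s : ℝ} (hl : l ∈ Ioo (0 : ℝ) 1) (hs : s ∈ Icc (0 : ℝ) 1) :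
    0 < s * (1 - l) + (1 - s) * l := by
  obtain ⟨h0, h1⟩ := hl
  obtain ⟨hs0, hs1⟩ := hs
  rcases hs0.eq_or_lt with rfl | hs0
  · simpa using h0
  · have := mul_pos hs0 (sub_pos.2 h1)
    have := mul_nonneg (sub_nonneg.2 hs1) h0.le
    linarith

theorem pickKernel_pos {l s : ℝ} (hl : l ∈ Ioo (0 : ℝ) 1) (hs : s ∈ Icc (0 : ℝ) 1) :
    0 < pickKernel l s :=
  div_pos hl.1 (pickKernel_denom_pos hl hs)

theorem pickKernel_continuousOn {l : ℝ} (hl : l ∈ Ioo (0 : ℝ) 1) :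
    ContinuousOn (pickKernel l) (Icc (0 : ℝ) 1) := by
  unfold pickKernel
  exact ContinuousOn.div (by fun_prop) (by fun_prop) fun s hs => (pickKernel_denom_pos hl hs).ne'

theorem pickKernel_zero {l : ℝ} (hl : l ∈ Ioo (0 : ℝ) 1) : pickKernel l 0 = 1 := by
  simp [pickKernel, hl.1.ne']

theorem pickKernel_inv {l s : ℝ} (hl : l ∈ Ioo (0 : ℝ) 1) (hs : s ∈ Icc (0 : ℝ) 1)
    (hs0 : s ≠ 0) :
    (1 + (1 / s - 1)) * l / (1 + ((1 / s - 1) - 1) * l) = pickKernel l s := by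
  have hd := pickKernel_denom_pos hl hs
  have hden : 1 + ((1 / s - 1) - 1) * l = (s * (1 - l) + (1 - s) * l) / s := by
    field_simp
    ring
  rw [hden, pickKernel]
  field_simp
  ring

/-- Duality step: the vector `F` is a nonnegative finite combination of points of the curve
`s ↦ (pickKernel (lam i) s)ᵢ`. -/
theorem exists_finite_pickKernel_combination (n : ℕ) (hn : 1 ≤ n) (F lam : Fin n → ℝ)
    (hF : ∀ i, 0 < F i) (hlam : ∀ i, lam i ∈ Ioo (0 : ℝ) 1)
    (hyp : ∀ a : Fin n → ℝ, (∀ s ∈ Icc (0 : ℝ) 1, 0 ≤ ∑ i, a i * pickKernel (lam i) s) →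
      0 ≤ ∑ i, a i * F i) :
    ∃ (ι : Type) (_ : Fintype ι) (m s : ι → ℝ), (∀ j, 0 ≤ m j) ∧
      (∀ j, s j ∈ Icc (0 : ℝ) 1) ∧ ∀ i, F i = ∑ j, m j * pickKernel (lam i) (s j) := by
  let i₀ : Fin n := ⟨0, hn⟩
  let u : ℝ → Fin n → ℝ := fun s i => pickKernel (lam i) s / pickKernel (lam i₀) s
  have hpos : ∀ s ∈ Icc (0 : ℝ) 1, 0 < pickKernel (lam i₀) s := fun s hs =>
    pickKernel_pos (hlam i₀) hs
  have hu : ContinuousOn u (Icc (0 : ℝ) 1) := continuousOn_pi.2 fun i =>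
    (pickKernel_continuousOn (hlam i)).div (pickKernel_continuousOn (hlam i₀))
      fun s hs => (hpos s hs).ne'
  have hmem : (fun i => F i / F i₀) ∈ convexHull ℝ (u '' Icc (0 : ℝ) 1) := by
    by_contra hnot
    obtain ⟨l, r, hl, hr⟩ := geometric_hahn_banach_closed_point (convex_convexHull ℝ _)
      (isCompact_convexHull_of_finiteDimensional (isCompact_Icc.image_of_continuousOn hu)).isClosed
      hnot
    have hsum : ∀ (x : Fin n → ℝ) (d : ℝ), d ≠ 0 →
        ∑ i, ((if i = i₀ then r else 0) - l (Pi.single i 1)) * x i =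
          r * x i₀ - d * l (fun i => x i / d) := by
      intro x d hd
      have hx : (fun i => x i / d) = ∑ i, (x i / d) • (Pi.single i 1 : Fin n → ℝ) := by
        ext k
        simp [Finset.sum_apply, Pi.single_apply]
      rw [hx, map_sum, Finset.mul_sum]
      simp only [sub_mul, Finset.sum_sub_distrib, ite_mul, zero_mul, Finset.sum_ite_eq',
        Finset.mem_univ, if_true, map_smul, smul_eq_mul]
      congr 1
      refine Finset.sum_congr rfl fun i _ => ?_
      field_simp
    have h := hyp (fun i => (if i = i₀ then r else 0) - l (Pi.single i 1)) fun s hs => by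
      rw [hsum (fun i => pickKernel (lam i) s) _ (hpos s hs).ne']
      have := mul_pos (hpos s hs)
        (sub_pos.2 (hl (u s) (subset_convexHull ℝ _ (mem_image_of_mem u hs))))
      simp only [u] at this
      linarith
    rw [hsum F _ (hF i₀).ne'] at h
    have := mul_pos (hF i₀) (sub_pos.2 hr)
    linarith
  rw [convexHull_eq] at hmem
  obtain ⟨ι, t, w, z, hw0, hw1, hz, hx⟩ := hmem
  rw [Finset.centerMass_eq_of_sum_1 _ _ hw1] at hx
  choose! s hs hsz using hz
  refine ⟨t, inferInstance, fun j => F i₀ * w j / pickKernel (lam i₀) (s j), fun j => s j,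
    fun j => ?_, fun j => hs j j.2, fun i => ?_⟩
  · exact div_nonneg (mul_nonneg (hF i₀).le (hw0 j j.2)) (hpos _ (hs j j.2)).le
  · have hi : ∑ j ∈ t, w j * z j i = F i / F i₀ := by
      simpa [Finset.sum_apply] using congrFun hx i
    rw [eq_div_iff (hF i₀).ne'] at hi
    rw [← hi, Finset.sum_coe_sort t
      (fun j => F i₀ * w j / pickKernel (lam i₀) (s j) * pickKernel (lam i) (s j)),
      Finset.sum_mul]
    refine Finset.sum_congr rfl fun j hj => ?_
    rw [← hsz j hj]
    simp only [u]
    ring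

/-- Theorem 2.2, (2) ⇒ (1): from the positivity condition (2) one produces a finite Borel measure
`ρ` on `[0,∞)` and a constant `c ≥ 0` (the mass at the point at infinity) giving an integral
representation, i.e. a Pick function on `(0,1)`, interpolating `f` at `λ₁, …, λₙ`. -/
theorem stmt_3 (n : ℕ) (hn : 1 ≤ n) (f : ℝ → ℝ)
    (hfc : ContinuousOn f (Icc (0:ℝ) 1))
    (hfpos : f '' Ioo (0:ℝ) 1 ⊆ Ioi (0:ℝ))
    (lam : Fin n → ℝ) (hlam : ∀ i, lam i ∈ Ioo (0:ℝ) 1)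
    (hyp : ∀ a : Fin n → ℝ,
      (∀ t : ℝ, 0 ≤ t →
        0 ≤ ∑ i, a i * ((1 + t) * lam i / (1 + (t - 1) * lam i))) →
      0 ≤ ∑ i, a i * f (lam i)) :
    ∃ (ρ : Measure (Ici (0:ℝ))) (_ : IsFiniteMeasure ρ) (c : ℝ), 0 ≤ c ∧
      ∀ i, f (lam i) =
        (∫ t : Ici (0:ℝ), (1 + (t : ℝ)) * lam i / (1 + ((t : ℝ) - 1) * lam i) ∂ρ) + c := by
  classical
  have hF : ∀ i, 0 < f (lam i) := fun i => hfpos (mem_image_of_mem f (hlam i))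
  obtain ⟨ι, _, m, s, hm, hs, hrep⟩ :=
    exists_finite_pickKernel_combination n hn (fun i => f (lam i)) lam hF hlam fun a ha => by
      refine hyp a fun t ht => ?_
      have hs : 1 / (1 + t) ∈ Icc (0 : ℝ) 1 :=
        ⟨by positivity, by rw [div_le_one (by positivity)]; linarith⟩
      have h := ha _ hs
      refine h.trans_eq (Finset.sum_congr rfl fun i _ => ?_)
      rw [← pickKernel_inv (hlam i) hs (by positivity), one_div_one_div, add_sub_cancel_left]
  have ht : ∀ j, 0 ≤ 1 / s j - 1 ∨ s j = 0 := fun j => by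
    rcases (hs j).1.eq_or_lt with h | h
    · exact Or.inr h.symm
    · exact Or.inl (sub_nonneg.2 ((one_le_div h).2 (hs j).2))
  -- The node `t = 1 / s - 1`; the cut-off at `0` is only active at `s = 0`, where the mass is `0`.
  let p : ι → Ici (0 : ℝ) := fun j => ⟨max (1 / s j - 1) 0, mem_Ici.2 (le_max_right _ _)⟩
  let M : ι → ℝ := fun j => if s j = 0 then 0 else m j
  have hM : ∀ j, 0 ≤ M j := fun j => by
    simp only [M]
    split_ifs
    exacts [le_rfl, hm j]
  refine ⟨∑ j, ENNReal.ofReal (M j) • Measure.dirac (p j), ?_,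
    ∑ j, if s j = 0 then m j else 0, ?_, fun i => ?_⟩
  · exact ⟨by simp [Measure.finsetSum_apply, ENNReal.sum_lt_top]⟩
  · exact Finset.sum_nonneg fun j _ => by split_ifs <;> [exact hm j; exact le_rfl]
  · rw [integral_finsetSum_measure fun j _ =>
      (integrable_dirac (by simp)).smul_measure ENNReal.ofReal_ne_top, ← Finset.sum_add_distrib,
      hrep i]
    refine Finset.sum_congr rfl fun j _ => ?_
    rw [integral_smul_measure, integral_dirac, ENNReal.toReal_ofReal (hM j)]
    by_cases h0 : s j = 0
    · simp [M, h0, pickKernel_zero (hlam i)]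
    · have hp : ((p j : Ici (0 : ℝ)) : ℝ) = 1 / s j - 1 := max_eq_left ((ht j).resolve_right h0)
      rw [hp, pickKernel_inv (hlam i) (hs j) h0]
      simp [M, h0]
end

section
/- For each n ≥ 1 there exists a continuous function f : [0,∞) → ℝ with f((0,∞)) ⊆ (0,∞) such that: (a) f is matrix monotone of order n on [0,∞); and (b) there exist 2n points λ₁, …, λ_{2n} ∈ (0,∞) such that no function h : (0,∞) → (0,∞) which is matrix monotone of order k for every k ∈ ℕ (i.e. operator monotone and positive on (0,∞)) satisfies h(λᵢ) = f(λᵢ) for all 1 ≤ i ≤ 2n. Equivalently, the interpolation class C_{2n}([0,∞)) does not contain the class P_n⁺([0,∞)) of positive n-monotone functions on [0,∞). -/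
/-!
The witness is `f(t) = ∑_{j < n} K_j(t) - ε K_n(t)` with `K_s(t) = t / (1 + s t)` and
`ε = 1 / (1 + ∑_{j < n} (n choose j)²)`. It is positive on `(0, ∞)` because `K_0(t) = t ≥ K_n(t)` and
`ε < 1`.

Order `n` monotonicity (`matrixMonotoneOn_ff`). With `R_s = (1 + s X)⁻¹`, the derivative of `K_s` at
`X` in the direction `D` is `R_s D R_s`. If `X` is an `n × n` positive matrix, then, after
multiplication by `∏ k, (1 + s x_k)` over the eigenvalues, `R_s` is polynomial in `s` of degree less
than `n`. Hence `R_n = ∑_{j < n} β_j R_j` with `|β_j| ≤ (n choose j)` (`exists_resolvent_eq`), and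
Cauchy–Schwarz (`qf_sum_le`) gives `ε R_n D R_n ≤ ∑_{j < n} R_j D R_j` for `D ≥ 0`.

No interpolation at `2n` points. A positive operator monotone `h` on `(0, ∞)` satisfies Hansen's
inequality `T h(X) T ≤ h(T X T + 2 δ)` for contractions `T` and `δ > 0` (`hansen`). For `n × n`
matrices this only involves the values of `h` at the `2n` eigenvalues of `X` and `T X T + 2 δ`, so it
is enough that `f` violates it (`exists_violation`). For `K_s` and `δ = 0` the gap on a vector `w` is
`s` times a quantity controlled by `S (1 + s B)⁻¹ B w`, where `B = T X T` and `S² = 1 - T²`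
(`mK_sub_compress`). If `S` has rank one and `B = diag(1, …, n)`, some `w` makes the gap vanish for
`s = 0, …, n - 1` and be positive for `s = n` (`exists_weights`); the term `-ε K_n` of `f` then
reverses the inequality.
-/

open Matrix Set MeasureTheory
open scoped ComplexOrder

/-! ### Quadratic forms of matrices -/

/-- The real part of the quadratic form `⟨w, M w⟩`, as a real-linear functional of `M`. For
Hermitian `M` the form is real, so nothing is lost by taking the real part. -/
noncomputable def qf {ι : Type*} [Fintype ι] (w : ι → ℂ) : Matrix ι ι ℂ →ₗ[ℝ] ℝ where
  toFun M := (star w ⬝ᵥ (M *ᵥ w)).re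
  map_add' M N := by simp [add_mulVec]
  map_smul' r M := by simp [smul_mulVec]

lemma qf_apply {ι : Type*} [Fintype ι] (w : ι → ℂ) (M : Matrix ι ι ℂ) :
    qf w M = (star w ⬝ᵥ (M *ᵥ w)).re := rfl

lemma qf_conj {ι : Type*} [Fintype ι] (w : ι → ℂ) (M C : Matrix ι ι ℂ) :
    qf w (Cᴴ * M * C) = qf (C *ᵥ w) M := by
  simp only [qf_apply, star_mulVec, ← mulVec_mulVec, dotProduct_mulVec, vecMul_vecMul, Matrix.mul_assoc]

lemma qf_nonneg {ι : Type*} [Fintype ι] (w : ι → ℂ) {M : Matrix ι ι ℂ} (hM : M.PosSemidef) :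
    0 ≤ qf w M := (Complex.le_def.1 (hM.dotProduct_mulVec_nonneg w)).1

lemma posSemidef_of_qf {ι : Type*} [Fintype ι] {M : Matrix ι ι ℂ} (hM : M.IsHermitian)
    (h : ∀ w, 0 ≤ qf w M) : M.PosSemidef := by
  refine .of_dotProduct_mulVec_nonneg hM fun w => ?_
  have := hM.im_star_dotProduct_mulVec_self w
  rw [Complex.le_def]
  exact ⟨h w, by simpa using this.symm⟩

lemma qf_one {ι : Type*} [Fintype ι] [DecidableEq ι] (w : ι → ℂ) :
    qf w 1 = ∑ i, ‖w i‖ ^ 2 := by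
  simp [qf_apply, dotProduct, ← Complex.normSq_eq_norm_sq, Complex.normSq_apply]

lemma continuous_qf {ι : Type*} [Fintype ι] (w : ι → ℂ) : Continuous (qf w) :=
  (qf w).continuous_of_finiteDimensional

/-- Cauchy–Schwarz for the seminorm `Z ↦ ⟨w, Z D Z w⟩^(1/2)` and a linear combination of Hermitian
matrices. -/
lemma qf_sum_le {ι : Type*} [Fintype ι] [DecidableEq ι] (w : ι → ℂ) {D : Matrix ι ι ℂ}
    (hD : D.PosSemidef) (s : Finset ℕ) (β : ℕ → ℝ) (Y : ℕ → Matrix ι ι ℂ)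
    (hY : ∀ j ∈ s, (Y j).IsHermitian) :
    qf w ((∑ j ∈ s, β j • Y j) * D * (∑ j ∈ s, β j • Y j)) ≤
      (∑ j ∈ s, β j ^ 2) * ∑ j ∈ s, qf w (Y j * D * Y j) := by
  obtain ⟨E, rfl⟩ : ∃ E : Matrix ι ι ℂ, D = Eᴴ * E := by
    open scoped MatrixOrder in
    exact CStarAlgebra.nonneg_iff_eq_star_mul_self.1 hD.nonneg
  have key : ∀ Z : Matrix ι ι ℂ, Z.IsHermitian →
      qf w (Z * (Eᴴ * E) * Z) = ∑ i, ‖(E *ᵥ (Z *ᵥ w)) i‖ ^ 2 := by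
    intro Z hZ
    rw [← qf_one, mulVec_mulVec, ← qf_conj, conjTranspose_mul, hZ.eq]
    simp only [Matrix.mul_one, Matrix.mul_assoc]
  have hZ : (∑ j ∈ s, β j • Y j).IsHermitian := by
    rw [IsHermitian, conjTranspose_sum]
    refine Finset.sum_congr rfl fun j hj => ?_
    rw [conjTranspose_smul, (hY j hj).eq]; simp
  rw [key _ hZ, Finset.sum_congr rfl fun j hj => key _ (hY j hj), Finset.sum_comm, Finset.mul_sum]
  refine Finset.sum_le_sum fun i _ => ?_
  have e : (E *ᵥ ((∑ j ∈ s, β j • Y j) *ᵥ w)) i = ∑ j ∈ s, (β j : ℂ) * (E *ᵥ (Y j *ᵥ w)) i := by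
    rw [sum_mulVec, mulVec_sum, Finset.sum_apply]
    refine Finset.sum_congr rfl fun j _ => ?_
    rw [smul_mulVec, mulVec_smul]; simp
  rw [e]
  calc _ ≤ (∑ j ∈ s, |β j| * ‖(E *ᵥ (Y j *ᵥ w)) i‖) ^ 2 := by
        gcongr
        refine (norm_sum_le _ _).trans (le_of_eq ?_)
        simp
    _ ≤ _ := by
        refine (Finset.sum_mul_sq_le_sq_mul_sq _ _ _).trans (le_of_eq ?_)
        simp

/-! ### The resolvents and the kernels `t / (1 + s t)` -/

/-- The resolvent `(1 + s X)⁻¹`. It is only used for `s ≥ 0` and `X` positive semidefinite, where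
`1 + s X` is invertible. -/
noncomputable def mR {ι : Type*} [Fintype ι] [DecidableEq ι] (s : ℝ) (X : Matrix ι ι ℂ) :
    Matrix ι ι ℂ := (1 + s • X)⁻¹

/-- The operator monotone kernel `t / (1 + s t)` evaluated at the matrix `X`. -/
noncomputable def mK {ι : Type*} [Fintype ι] [DecidableEq ι] (s : ℝ) (X : Matrix ι ι ℂ) :
    Matrix ι ι ℂ := X * mR s X

section
variable {ι : Type*} [Fintype ι] [DecidableEq ι] {X Y A D : Matrix ι ι ℂ} {s τ : ℝ}

lemma posDef_one_add (hX : X.PosSemidef) (hs : 0 ≤ s) : (1 + s • X).PosDef :=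
  PosDef.one.add_posSemidef (hX.smul hs)

lemma isUnit_det_one_add (hX : X.PosSemidef) (hs : 0 ≤ s) : IsUnit (1 + s • X).det :=
  (isUnit_iff_isUnit_det _).1 (posDef_one_add hX hs).isUnit

lemma mR_mul (hX : X.PosSemidef) (hs : 0 ≤ s) : mR s X * (1 + s • X) = 1 :=
  nonsing_inv_mul _ (isUnit_det_one_add hX hs)

lemma mul_mR (hX : X.PosSemidef) (hs : 0 ≤ s) : (1 + s • X) * mR s X = 1 :=
  mul_nonsing_inv _ (isUnit_det_one_add hX hs)

lemma mR_posDef (hX : X.PosSemidef) (hs : 0 ≤ s) : (mR s X).PosDef := (posDef_one_add hX hs).inv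

lemma posSemidef_of_spectrum (hX : X.IsHermitian) (h : spectrum ℝ X ⊆ Ici 0) : X.PosSemidef :=
  hX.posSemidef_iff_eigenvalues_nonneg.2 fun i => h (hX.eigenvalues_mem_spectrum_real i)

lemma spectrum_of_posSemidef (hX : X.PosSemidef) : spectrum ℝ X ⊆ Ici 0 := by
  rw [hX.1.spectrum_real_eq_range_eigenvalues]
  rintro _ ⟨i, rfl⟩
  exact hX.eigenvalues_nonneg i

lemma spectrum_of_posDef (hX : X.PosDef) : spectrum ℝ X ⊆ Ioi 0 := by
  rw [hX.1.spectrum_real_eq_range_eigenvalues]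
  rintro _ ⟨i, rfl⟩
  exact hX.eigenvalues_pos i

/-- The spectrum of a matrix is finite, so continuity in the functional calculus is automatic. -/
lemma cont_spec (f : ℝ → ℝ) (X : Matrix ι ι ℂ) : ContinuousOn f (spectrum ℝ X) :=
  X.finite_real_spectrum.continuousOn f

lemma cfc_mR (hX : X.PosSemidef) (hs : 0 ≤ s) : cfc (fun t : ℝ => (1 + s * t)⁻¹) X = mR s X := by
  have hsa : IsSelfAdjoint X := hX.1
  symm
  apply inv_eq_left_inv
  have e : 1 + s • X = cfc (fun t : ℝ => 1 + s * t) X := by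
    rw [cfc_const_add _ _ _ (cont_spec _ _), cfc_const_mul_id s X]; simp
  rw [e, ← cfc_mul _ _ _ (cont_spec _ _) (cont_spec _ _), ← cfc_const_one ℝ X]
  refine cfc_congr fun t ht => inv_mul_cancel₀ ?_
  have := spectrum_of_posSemidef hX ht
  have : 0 ≤ s * t := mul_nonneg hs this
  positivity

lemma cfc_mK (hX : X.PosSemidef) (hs : 0 ≤ s) : cfc (fun t : ℝ => t / (1 + s * t)) X = mK s X := by
  have hsa : IsSelfAdjoint X := hX.1
  simp only [div_eq_mul_inv]
  rw [cfc_mul _ _ _ (cont_spec _ _) (cont_spec _ _), cfc_mR hX hs, cfc_id' ℝ X, mK]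

lemma mK_comm (hX : X.PosSemidef) (hs : 0 ≤ s) : mK s X = mR s X * X := by
  calc mK s X = mR s X * (1 + s • X) * (X * mR s X) := by rw [mR_mul hX hs, Matrix.one_mul, mK]
    _ = mR s X * X * ((1 + s • X) * mR s X) := by
      simp only [Matrix.mul_assoc, add_mul, mul_add, Matrix.one_mul, Matrix.smul_mul, Matrix.mul_smul]
    _ = _ := by rw [mul_mR hX hs, Matrix.mul_one]

/-- Resolvent identity; its infinitesimal form is `hasDerivAt_mK`. -/
lemma mK_sub (hX : X.PosSemidef) (hY : Y.PosSemidef) (hs : 0 ≤ s) :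
    mK s Y - mK s X = mR s X * (Y - X) * mR s Y := by
  calc _ = mR s X * (1 + s • X) * (Y * mR s Y) - mR s X * X * ((1 + s • Y) * mR s Y) := by
        rw [mR_mul hX hs, mul_mR hY hs, mK_comm hX hs, mK]; simp
    _ = _ := by
      simp only [Matrix.mul_assoc, add_mul, mul_add, Matrix.one_mul, Matrix.smul_mul,
        Matrix.mul_smul, sub_mul, mul_sub]
      abel

lemma posSemidef_path (hA : A.PosSemidef) (hD : D.PosSemidef) (hτ : 0 ≤ τ) :
    (A + τ • D).PosSemidef := hA.add (hD.smul hτ)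

lemma continuousAt_mR (hA : A.PosSemidef) (hD : D.PosSemidef) (hτ : 0 ≤ τ) (hs : 0 ≤ s) :
    ContinuousAt (fun τ : ℝ => mR s (A + τ • D)) τ := by
  have hu := isUnit_det_one_add (posSemidef_path hA hD hτ) hs
  have h1 : ContinuousAt (fun M : Matrix ι ι ℂ => M⁻¹) (1 + s • (A + τ • D)) := by
    apply continuousAt_matrix_inv
    have : (Ring.inverse : ℂ → ℂ) = fun z => z⁻¹ := by ext z; simp
    rw [this]
    exact continuousAt_inv₀ hu.ne_zero
  exact ContinuousAt.comp (f := fun τ : ℝ => 1 + s • (A + τ • D)) h1 (by fun_prop)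

lemma continuousAt_mK (hA : A.PosSemidef) (hD : D.PosSemidef) (hτ : 0 ≤ τ) (hs : 0 ≤ s) :
    ContinuousAt (fun τ : ℝ => mK s (A + τ • D)) τ := by
  have := continuousAt_mR hA hD hτ hs
  unfold mK
  exact ContinuousAt.mul (by fun_prop) this

lemma hasDerivAt_mK (w : ι → ℂ) (hA : A.PosSemidef) (hD : D.PosSemidef) (hτ : 0 < τ)
    (hs : 0 ≤ s) :
    HasDerivAt (fun τ : ℝ => qf w (mK s (A + τ • D)))
      (qf w (mR s (A + τ • D) * D * mR s (A + τ • D))) τ := by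
  rw [hasDerivAt_iff_tendsto_slope]
  have hc : ContinuousAt
      (fun τ' : ℝ => qf w (mR s (A + τ • D) * D * mR s (A + τ' • D))) τ := by
    refine (continuous_qf w).continuousAt.comp ?_
    exact ContinuousAt.mul continuousAt_const (continuousAt_mR hA hD hτ.le hs)
  refine (hc.tendsto.mono_left nhdsWithin_le_nhds).congr' ?_
  filter_upwards [self_mem_nhdsWithin, nhdsWithin_le_nhds (lt_mem_nhds hτ)] with τ' hne hpos
  have hne' : τ' - τ ≠ 0 := sub_ne_zero.2 hne
  rw [slope_def_field, ← map_sub, mK_sub (posSemidef_path hA hD hτ.le)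
    (posSemidef_path hA hD (le_of_lt hpos)) hs]
  have : A + τ' • D - (A + τ • D) = (τ' - τ) • D := by rw [sub_smul]; abel
  rw [this, Matrix.mul_smul, Matrix.smul_mul, map_smul, smul_eq_mul]
  field_simp
end

/-! ### Monotonicity of order `n` -/

/-- For `n` points `x i`, the value at `s = n` of every function `s ↦ (1 + s x i)⁻¹` is one and the
same combination of its values at `s = 0, …, n - 1`. With `P s = ∏ k, (1 + s x k)`, the function
`P s / (1 + s x i)` is a polynomial in `s` of degree less than `n`, so its `n`-th finite difference
vanishes. As `P` is increasing, the coefficients are at most binomial coefficients. -/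
lemma exists_extrapolation {n : ℕ} (x : Fin n → ℝ) (hx : ∀ i, 0 ≤ x i) :
    ∃ β : ℕ → ℝ, (∀ j ∈ Finset.range n, β j ^ 2 ≤ (n.choose j : ℝ) ^ 2) ∧
      ∀ i, (1 + n * x i)⁻¹ = ∑ j ∈ Finset.range n, β j * (1 + j * x i)⁻¹ := by
  classical
  set P : ℝ → ℝ := fun s => ∏ k, (1 + s * x k) with hP
  have hpos : ∀ s : ℝ, 0 ≤ s → 0 < P s := fun s hs =>
    Finset.prod_pos fun k _ => by have := mul_nonneg hs (hx k); positivity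
  refine ⟨fun j => (-1) ^ (n - 1 - j) * n.choose j * (P j / P n), fun j hj => ?_, fun i => ?_⟩
  · have hjn : (j : ℝ) ≤ n := by exact_mod_cast (Finset.mem_range.1 hj).le
    have h1 : P j / P n ≤ 1 := by
      rw [div_le_one (hpos _ n.cast_nonneg)]
      refine Finset.prod_le_prod (fun k _ => ?_) fun k _ => ?_
      · have := mul_nonneg j.cast_nonneg (hx k) (α := ℝ); positivity
      · have := hx k; gcongr
    have h0 : 0 ≤ P j / P n := (div_pos (hpos _ j.cast_nonneg) (hpos _ n.cast_nonneg)).le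
    rw [mul_pow, mul_pow, ← pow_mul, mul_comm _ 2, pow_mul]
    simp only [even_two, Even.neg_pow, one_pow, one_mul]
    exact mul_le_of_le_one_right (by positivity) (pow_le_one₀ h0 h1)
  · set N : Polynomial ℝ := ∏ k ∈ Finset.univ.erase i, (1 + Polynomial.C (x k) * Polynomial.X)
      with hN
    have hNe : ∀ s : ℝ, 0 ≤ s → N.eval s = P s * (1 + s * x i)⁻¹ := by
      intro s hs
      have hne : 1 + s * x i ≠ 0 := by have := mul_nonneg hs (hx i); positivity
      rw [eq_mul_inv_iff_mul_eq₀ hne, hN, Polynomial.eval_prod, hP]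
      beta_reduce
      rw [← Finset.prod_erase_mul _ _ (Finset.mem_univ i)]
      congr 1
      refine Finset.prod_congr rfl fun k _ => ?_
      simp only [Polynomial.eval_add, Polynomial.eval_one, Polynomial.eval_mul, Polynomial.eval_C,
        Polynomial.eval_X]
      ring
    have hdeg : N.natDegree < n := by
      refine (Polynomial.natDegree_prod_le _ _).trans_lt ?_
      refine (Finset.sum_le_card_nsmul _ _ 1 fun k _ => ?_).trans_lt ?_
      · have : (Polynomial.C (x k) * Polynomial.X).natDegree ≤ 1 :=
          (Polynomial.natDegree_C_mul_le _ _).trans Polynomial.natDegree_X_le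
        refine (Polynomial.natDegree_add_le _ _).trans (by simpa using this)
      · rw [Finset.card_erase_of_mem (Finset.mem_univ i)]
        simp; exact i.pos
    have hd := congrFun (Polynomial.fwdDiff_iter_eq_zero_of_degree_lt hdeg) 0
    rw [fwdDiff_iter_eq_sum_shift, Finset.sum_range_succ] at hd
    simp only [zero_add, nsmul_eq_mul, mul_one, Nat.sub_self, pow_zero, Nat.choose_self,
      Pi.zero_apply, zsmul_eq_mul, Nat.cast_one, Int.cast_one, one_mul] at hd
    have hPn := (hpos n n.cast_nonneg).ne'
    have e : (1 + n * x i)⁻¹ = N.eval (n : ℝ) / P n := by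
      rw [hNe _ n.cast_nonneg]; field_simp
    rw [e, eq_neg_of_add_eq_zero_right hd, ← Finset.sum_neg_distrib, Finset.sum_div]
    refine Finset.sum_congr rfl fun j hj => ?_
    rw [hNe _ j.cast_nonneg]
    have : n - j = (n - 1 - j) + 1 := by have := Finset.mem_range.1 hj; omega
    rw [this, pow_succ]
    push_cast
    ring

/-- The function `t ↦ ∑_{j < n} t / (1 + j t) - ε t / (1 + n t)`: it is operator monotone up to the
last term, whose sign is wrong. -/
noncomputable def ff (n : ℕ) (ε : ℝ) (t : ℝ) : ℝ :=
  ∑ j ∈ Finset.range n, t / (1 + j * t) - ε * (t / (1 + n * t))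

/-- The function `ff n ε` evaluated at the matrix `X`. -/
noncomputable def mF {ι : Type*} [Fintype ι] [DecidableEq ι] (n : ℕ) (ε : ℝ) (X : Matrix ι ι ℂ) :
    Matrix ι ι ℂ := ∑ j ∈ Finset.range n, mK (j : ℝ) X - ε • mK (n : ℝ) X

lemma cfc_ff {ι : Type*} [Fintype ι] [DecidableEq ι] (n : ℕ) (ε : ℝ) {X : Matrix ι ι ℂ}
    (hX : X.PosSemidef) : cfc (ff n ε) X = mF n ε X := by
  have hsa : IsSelfAdjoint X := hX.1
  have e : ff n ε = fun t : ℝ =>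
      (∑ j ∈ Finset.range n, fun t : ℝ => t / (1 + j * t)) t - ε * (t / (1 + n * t)) := by
    ext t; simp [ff]
  rw [e, mF]
  rw [cfc_sub _ _ _ (cont_spec _ _) (cont_spec _ _), cfc_const_mul _ _ _ (cont_spec _ _),
    cfc_mK hX n.cast_nonneg]
  change cfc (∑ j ∈ Finset.range n, fun t : ℝ => t / (1 + j * t)) X - _ = _
  rw [cfc_sum _ _ _ (fun _ _ => cont_spec _ _)]
  rw [Finset.sum_congr rfl fun j _ => cfc_mK hX (Nat.cast_nonneg j)]

/-- The matrix form of `exists_extrapolation`; this is where the size `n` of the matrices enters. -/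
lemma exists_resolvent_eq {n : ℕ} {X : Matrix (Fin n) (Fin n) ℂ} (hX : X.PosSemidef) :
    ∃ β : ℕ → ℝ, (∀ j ∈ Finset.range n, β j ^ 2 ≤ (n.choose j : ℝ) ^ 2) ∧
      mR (n : ℝ) X = ∑ j ∈ Finset.range n, β j • mR (j : ℝ) X := by
  have hsa : IsSelfAdjoint X := hX.1
  obtain ⟨β, hβ, h⟩ := exists_extrapolation hX.1.eigenvalues hX.eigenvalues_nonneg
  refine ⟨β, hβ, ?_⟩
  have e : ∀ j ∈ Finset.range n, β j • mR (j : ℝ) X =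
      cfc (fun t : ℝ => β j * (1 + (j : ℝ) * t)⁻¹) X := fun j _ => by
    rw [cfc_const_mul _ _ _ (cont_spec _ _), cfc_mR hX j.cast_nonneg]
  rw [Finset.sum_congr rfl e, ← cfc_sum _ _ _ (fun _ _ => cont_spec _ _),
    ← cfc_mR hX n.cast_nonneg]
  refine cfc_congr fun t ht => ?_
  rw [hX.1.spectrum_real_eq_range_eigenvalues] at ht
  obtain ⟨i, rfl⟩ := ht
  simpa using h i

/-- Along the segment from `A` to `B = A + D` the derivative of `t / (1 + s t)` is `R_s D R_s`, and
`ε R_n D R_n ≤ ∑_{j < n} R_j D R_j` by extrapolation and Cauchy–Schwarz. -/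
lemma matrixMonotoneOn_ff (n : ℕ) {ε : ℝ} (hε : 0 ≤ ε)
    (hε' : ε * ∑ j ∈ Finset.range n, (n.choose j : ℝ) ^ 2 ≤ 1) :
    MatrixMonotoneOn n (ff n ε) (Ici 0) := by
  intro A B hA hB hsA hsB hD
  have hA' := posSemidef_of_spectrum hA hsA
  have hB' := posSemidef_of_spectrum hB hsB
  refine posSemidef_of_qf ?_ fun w => ?_
  · exact IsHermitian.sub (cfc_predicate (R := ℝ) (ff n ε) B) (cfc_predicate (R := ℝ) (ff n ε) A)
  rw [cfc_ff n ε hA', cfc_ff n ε hB', map_sub, sub_nonneg]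
  set D := B - A with hDdef
  set φ : ℝ → ℝ := fun τ => qf w (mF n ε (A + τ • D)) with hφ
  have hφ' : φ = fun τ => ∑ j ∈ Finset.range n, qf w (mK (j : ℝ) (A + τ • D)) -
      ε * qf w (mK (n : ℝ) (A + τ • D)) := by
    ext τ; simp [hφ, mF]
  have hmono : MonotoneOn φ (Icc 0 1) := by
    refine monotoneOn_of_hasDerivWithinAt_nonneg (f' := fun τ =>
      ∑ j ∈ Finset.range n, qf w (mR (j : ℝ) (A + τ • D) * D * mR (j : ℝ) (A + τ • D)) -
        ε * qf w (mR (n : ℝ) (A + τ • D) * D * mR (n : ℝ) (A + τ • D)))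
      (convex_Icc 0 1) ?_ ?_ ?_
    · intro τ hτ
      have hc : ∀ j : ℕ, ContinuousAt (fun τ => qf w (mK (j : ℝ) (A + τ • D))) τ := fun j =>
        (continuous_qf w).continuousAt.comp (continuousAt_mK hA' hD hτ.1 j.cast_nonneg)
      rw [hφ']
      exact ((tendsto_finsetSum _ fun j _ => hc j).sub ((hc n).const_mul ε)).mono_left
        nhdsWithin_le_nhds
    · intro τ hτ
      rw [interior_Icc] at hτ
      rw [hφ']
      exact ((HasDerivAt.fun_sum fun j _ => hasDerivAt_mK w hA' hD hτ.1 j.cast_nonneg).sub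
        ((hasDerivAt_mK w hA' hD hτ.1 n.cast_nonneg).const_mul ε)).hasDerivWithinAt
    · intro τ hτ
      rw [interior_Icc] at hτ
      have hX := posSemidef_path hA' hD hτ.1.le
      obtain ⟨β, hβ, e⟩ := exists_resolvent_eq hX
      have h1 := qf_sum_le w hD (Finset.range n) β (fun j => mR (j : ℝ) (A + τ • D))
        fun j _ => (mR_posDef hX j.cast_nonneg).1
      rw [← e] at h1
      have h2 : 0 ≤ ∑ j ∈ Finset.range n,
          qf w (mR (j : ℝ) (A + τ • D) * D * mR (j : ℝ) (A + τ • D)) := by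
        refine Finset.sum_nonneg fun j _ => qf_nonneg w ?_
        have := hD.conjTranspose_mul_mul_same (mR (j : ℝ) (A + τ • D))
        rwa [(mR_posDef hX j.cast_nonneg).1.eq] at this
      have h3 := mul_le_mul_of_nonneg_left h1 hε
      have h4 : ε * ∑ j ∈ Finset.range n, β j ^ 2 ≤ 1 :=
        (mul_le_mul_of_nonneg_left (Finset.sum_le_sum hβ) hε).trans hε'
      rw [← mul_assoc] at h3
      have h5 := mul_le_mul_of_nonneg_right h4 h2
      rw [one_mul] at h5
      exact sub_nonneg.2 (h3.trans h5)
  have := hmono (left_mem_Icc.2 zero_le_one) (right_mem_Icc.2 zero_le_one) zero_le_one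
  simpa [hφ, hDdef] using this

/-! ### Hansen's inequality for positive operator monotone functions -/

lemma cfc_eq_aeval {ι : Type*} [Fintype ι] [DecidableEq ι] {X : Matrix ι ι ℂ}
    (hX : X.IsHermitian) (h : ℝ → ℝ) (p : Polynomial ℝ)
    (hp : ∀ t ∈ spectrum ℝ X, p.eval t = h t) : cfc h X = Polynomial.aeval X p := by
  have hsa : IsSelfAdjoint X := hX
  rw [← cfc_polynomial p X]
  exact cfc_congr fun t ht => (hp t ht).symm

lemma exists_poly (h : ℝ → ℝ) {s : Set ℝ} (hs : s.Finite) :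
    ∃ p : Polynomial ℝ, ∀ t ∈ s, p.eval t = h t :=
  ⟨Lagrange.interpolate hs.toFinset id h, fun t ht =>
    Lagrange.eval_interpolate_at_node (s := hs.toFinset) (v := id) h
      (Function.injective_id.injOn) (by simpa using ht)⟩

/-- Operator monotonicity for matrices indexed by an arbitrary finite type. -/
lemma posSemidef_cfc_sub {h : ℝ → ℝ} {I : Set ℝ} (hh : ∀ k : ℕ, MatrixMonotoneOn k h I)
    {ι : Type*} [Fintype ι] [DecidableEq ι] {A B : Matrix ι ι ℂ} (hA : A.IsHermitian)
    (hB : B.IsHermitian) (hsA : spectrum ℝ A ⊆ I) (hsB : spectrum ℝ B ⊆ I)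
    (hAB : (B - A).PosSemidef) : (cfc h B - cfc h A).PosSemidef := by
  let e := Fintype.equivFin ι
  let φ := Matrix.reindexAlgEquiv ℝ ℂ e
  have hφ : ∀ M : Matrix ι ι ℂ, φ M = M.submatrix e.symm e.symm := fun M => rfl
  have hherm : ∀ {M : Matrix ι ι ℂ}, M.IsHermitian → (φ M).IsHermitian := fun hM =>
    hM.submatrix _
  have hcfc : ∀ {M : Matrix ι ι ℂ}, M.IsHermitian → cfc h (φ M) = φ (cfc h M) := by
    intro M hM
    obtain ⟨p, hp⟩ := exists_poly h (Matrix.finite_real_spectrum (A := M))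
    rw [cfc_eq_aeval hM h p hp, cfc_eq_aeval (hherm hM) h p, ← Polynomial.aeval_algHom_apply φ]
    rwa [AlgEquiv.spectrum_eq φ]
  have key := hh _ (φ A) (φ B) (hherm hA) (hherm hB) (by rwa [AlgEquiv.spectrum_eq φ])
    (by rwa [AlgEquiv.spectrum_eq φ]) (by rw [← map_sub]; exact hAB.submatrix _)
  rw [hcfc hA, hcfc hB, ← map_sub, hφ] at key
  exact (posSemidef_submatrix_equiv e.symm).1 key

/-- For an involution `V`, the algebra homomorphism `(P, Q) ↦ V (P ⊕ Q) V` into block matrices. -/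
noncomputable def blockHom {ι : Type*} [Fintype ι] [DecidableEq ι] (V : Matrix (ι ⊕ ι) (ι ⊕ ι) ℂ)
    (hV : V * V = 1) : (Matrix ι ι ℂ × Matrix ι ι ℂ) →ₐ[ℝ] Matrix (ι ⊕ ι) (ι ⊕ ι) ℂ :=
  AlgHom.ofLinearMap
    { toFun := fun q => V * fromBlocks q.1 0 0 q.2 * V
      map_add' := fun q r => by
        rw [← add_mul, ← mul_add, fromBlocks_add]; simp
      map_smul' := fun c q => by
        have : fromBlocks (c • q).1 0 0 (c • q).2 = c • fromBlocks q.1 0 0 q.2 := by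
          rw [fromBlocks_smul]; simp
        rw [this]; simp }
    (by simp [hV])
    (fun q r => by
      change V * fromBlocks (q.1 * r.1) 0 0 (q.2 * r.2) * V =
        V * fromBlocks q.1 0 0 q.2 * V * (V * fromBlocks r.1 0 0 r.2 * V)
      have : fromBlocks (q.1 * r.1) 0 0 (q.2 * r.2) =
        fromBlocks q.1 0 0 q.2 * (V * V) * fromBlocks r.1 0 0 r.2 := by
          rw [hV, Matrix.mul_one, fromBlocks_multiply]; simp
      rw [this]
      simp only [Matrix.mul_assoc])

lemma cfc_blocks {ι : Type*} [Fintype ι] [DecidableEq ι] (h : ℝ → ℝ)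
    {V : Matrix (ι ⊕ ι) (ι ⊕ ι) ℂ} (hV : V * V = 1) (hVh : V.IsHermitian)
    {X Y : Matrix ι ι ℂ} (hX : X.IsHermitian) (hY : Y.IsHermitian) :
    cfc h (V * fromBlocks X 0 0 Y * V) = V * fromBlocks (cfc h X) 0 0 (cfc h Y) * V := by
  have hH : (V * fromBlocks X 0 0 Y * V).IsHermitian := by
    have : (fromBlocks X 0 0 Y).IsHermitian := hX.fromBlocks (by simp) hY
    have := isHermitian_conjTranspose_mul_mul V this
    rwa [hVh.eq] at this
  obtain ⟨p, hp⟩ := exists_poly h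
    ((Matrix.finite_real_spectrum (A := X)).union ((Matrix.finite_real_spectrum (A := Y)).union
      (Matrix.finite_real_spectrum (A := V * fromBlocks X 0 0 Y * V))))
  rw [cfc_eq_aeval hX h p fun t ht => hp t (Or.inl ht),
    cfc_eq_aeval hY h p fun t ht => hp t (Or.inr (Or.inl ht)),
    cfc_eq_aeval hH h p fun t ht => hp t (Or.inr (Or.inr ht))]
  have e := Polynomial.aeval_algHom_apply (blockHom V hV) (X, Y) p
  have e1 := Polynomial.aeval_algHom_apply (AlgHom.fst ℝ (Matrix ι ι ℂ) (Matrix ι ι ℂ)) (X, Y) p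
  have e2 := Polynomial.aeval_algHom_apply (AlgHom.snd ℝ (Matrix ι ι ℂ) (Matrix ι ι ℂ)) (X, Y) p
  simp only [AlgHom.fst_apply, AlgHom.snd_apply] at e1 e2
  rw [e1, e2]
  exact e

lemma posDef_fromBlocks {ι : Type*} [Fintype ι] [DecidableEq ι] {P Q : Matrix ι ι ℂ}
    (hP : P.PosDef) (hQ : Q.PosDef) : (fromBlocks P 0 0 Q).PosDef := by
  have := hP.isUnit.invertible
  have h := PosDef.fromBlocks₁₁ (0 : Matrix ι ι ℂ) Q hP
  simp only [conjTranspose_zero, Matrix.zero_mul, Matrix.mul_zero, sub_zero] at h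
  rw [(h.2 hQ.posSemidef).posDef_iff_isUnit, isUnit_iff_isUnit_det, det_fromBlocks_zero₂₁]
  exact ((isUnit_iff_isUnit_det _).1 hP.isUnit).mul ((isUnit_iff_isUnit_det _).1 hQ.isUnit)

/-- Hansen's inequality `T h(X) T ≤ h(T X T + 2 δ)` for a Hermitian contraction `T` with commuting
defect `S`. The block matrix `V = [[T, S], [S, -T]]` is a unitary involution, and
`V (X ⊕ δ) V ≤ (T X T + 2 δ) ⊕ N` when `N` is large enough. Applying `h` and comparing the upper left
corners gives `T h(X) T + h(δ) S² ≤ h(T X T + 2 δ)`, and `h(δ) > 0`. -/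
lemma hansen {h : ℝ → ℝ} (hh : ∀ k : ℕ, MatrixMonotoneOn k h (Ioi 0))
    (hpos : h '' Ioi 0 ⊆ Ioi 0) {ι : Type*} [Fintype ι] [DecidableEq ι]
    {T S X : Matrix ι ι ℂ} (hT : T.IsHermitian) (hS : S.IsHermitian) (hTS : T * S = S * T)
    (hTS1 : T * T + S * S = 1) (hX : X.PosDef) {δ : ℝ} (hδ : 0 < δ) :
    (cfc h (T * X * T + δ • (2 : ℝ) • 1) - T * cfc h X * T).PosSemidef := by
  set V : Matrix (ι ⊕ ι) (ι ⊕ ι) ℂ := fromBlocks T S S (-T) with hVdef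
  have hV : V * V = 1 := by
    rw [hVdef, fromBlocks_multiply, ← fromBlocks_one]
    congr 1
    · rw [hTS]; simp
    · rw [← hTS]; simp
    · rw [← hTS1]; simp [add_comm]
  have hVh : V.IsHermitian := hT.fromBlocks hS.eq hT.neg
  have hδ1 : (δ • (1 : Matrix ι ι ℂ)).PosDef := PosDef.one.smul hδ
  set Y : Matrix ι ι ℂ := T * X * S - δ • (T * S) with hY
  have hYh : Yᴴ = S * X * T - δ • (T * S) := by
    rw [hY, conjTranspose_sub, conjTranspose_smul]
    simp only [conjTranspose_mul, hT.eq, hS.eq, hX.1.eq, Matrix.mul_assoc, hTS]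
    simp
  -- `N` is what a Schur complement requires: `Y` is minus the off-diagonal block of the difference.
  set N : Matrix ι ι ℂ := 1 + (S * X * S + δ • (T * T) + δ⁻¹ • (Yᴴ * Y)) with hN
  have hTT : (T * T).PosSemidef := by
    have := posSemidef_conjTranspose_mul_self T; rwa [hT.eq] at this
  have hSS : (S * S).PosSemidef := by
    have := posSemidef_conjTranspose_mul_self S; rwa [hS.eq] at this
  have hNp : N.PosDef := by
    refine PosDef.one.add_posSemidef ((PosSemidef.add ?_ (hTT.smul hδ.le)).add
      ((posSemidef_conjTranspose_mul_self Y).smul (inv_nonneg.2 hδ.le)))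
    have := hX.posSemidef.conjTranspose_mul_mul_same S; rwa [hS.eq] at this
  set B : Matrix ι ι ℂ := T * X * T + δ • (2 : ℝ) • 1 with hB
  have hBp : B.PosDef := by
    refine PosDef.posSemidef_add ?_ ((PosDef.one.smul (two_pos : (0 : ℝ) < 2)).smul hδ)
    have := hX.posSemidef.conjTranspose_mul_mul_same T; rwa [hT.eq] at this
  have hA : (V * fromBlocks X 0 0 (δ • 1) * V).PosDef := by
    have h1 : (fromBlocks X 0 0 (δ • 1 : Matrix ι ι ℂ)).PosDef := by
      exact posDef_fromBlocks hX hδ1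
    have := h1.conjTranspose_mul_mul_same (B := V)
      (mulVec_injective_of_isUnit ⟨⟨V, V, hV, hV⟩, rfl⟩)
    rwa [hVh.eq] at this
  have hBN : (1 * fromBlocks B 0 0 N * 1).PosDef := by
    rw [Matrix.one_mul, Matrix.mul_one]; exact posDef_fromBlocks hBp hNp
  have hle : (1 * fromBlocks B 0 0 N * 1 - V * fromBlocks X 0 0 (δ • 1) * V).PosSemidef := by
    have e : 1 * fromBlocks B 0 0 N * 1 - V * fromBlocks X 0 0 (δ • 1) * V =
        δ⁻¹ • ((fromBlocks (δ • 1) (-Y) 0 0)ᴴ * fromBlocks (δ • 1) (-Y) 0 0) +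
          fromBlocks (δ • (T * T)) 0 0 1 := by
      rw [hVdef, fromBlocks_conjTranspose, fromBlocks_multiply, fromBlocks_multiply,
        fromBlocks_multiply, fromBlocks_smul, fromBlocks_add, Matrix.one_mul, Matrix.mul_one,
        sub_eq_add_neg (fromBlocks _ _ _ _), fromBlocks_neg, fromBlocks_add]
      have h2 : (T * T) = 1 - S * S := by rw [← hTS1]; simp
      congr 1
      · rw [hB, h2]
        simp [smul_smul, hδ.ne', smul_sub, two_smul]
        module
      · simp [smul_smul, hδ.ne', hY, hTS, sub_eq_add_neg]
      · simp [smul_smul, hδ.ne', hYh, hTS, sub_eq_add_neg]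
      · rw [hN]
        simp
        abel
    rw [e]
    refine PosSemidef.add ((posSemidef_conjTranspose_mul_self _).smul (inv_nonneg.2 hδ.le)) ?_
    have : Invertible (1 : Matrix ι ι ℂ) := invertibleOne
    have h := PosDef.fromBlocks₂₂ (δ • (T * T)) (0 : Matrix ι ι ℂ) (D := 1) PosDef.one
    simp only [conjTranspose_zero, Matrix.mul_zero, sub_zero] at h
    exact h.2 (hTT.smul hδ.le)
  have key := posSemidef_cfc_sub hh hA.1 hBN.1 (spectrum_of_posDef hA) (spectrum_of_posDef hBN) hle
  rw [cfc_blocks h hV hVh hX.1 hδ1.1, cfc_blocks h (Matrix.one_mul 1) isHermitian_one hBp.1 hNp.1]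
    at key
  have k2 := key.submatrix Sum.inl
  have hc : cfc h (δ • (1 : Matrix ι ι ℂ)) = h δ • 1 := by
    have := cfc_algebraMap (A := Matrix ι ι ℂ) δ h
    simpa [Algebra.algebraMap_eq_smul_one] using this
  have e3 : (1 * fromBlocks (cfc h B) 0 0 (cfc h N) * 1 -
      V * fromBlocks (cfc h X) 0 0 (cfc h (δ • (1 : Matrix ι ι ℂ))) * V).submatrix Sum.inl Sum.inl =
      cfc h B - T * cfc h X * T - h δ • (S * S) := by
    change toBlocks₁₁ _ = _
    rw [hVdef, fromBlocks_multiply, fromBlocks_multiply, Matrix.one_mul, Matrix.mul_one,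
        sub_eq_add_neg (fromBlocks _ _ _ _), fromBlocks_neg, fromBlocks_add, toBlocks_fromBlocks₁₁, hc]
    simp
    abel
  rw [e3] at k2
  have hδh : 0 < h δ := hpos ⟨δ, hδ, rfl⟩
  have := k2.add (hSS.smul hδh.le)
  simpa using this

/-! ### Violation of Hansen's inequality -/

/-- For `K_s(t) = t / (1 + s t)` and `B = T X T`, the gap `⟨w, (K_s(B) - T K_s(X) T) w⟩` in Hansen's
inequality is `s` times a sum of two nonnegative terms, both of which vanish as soon as
`S (1 + s B)⁻¹ B w = 0`. -/
lemma mK_sub_compress {ι : Type*} [Fintype ι] [DecidableEq ι]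
    {T G S X B : Matrix ι ι ℂ} (hT : T.IsHermitian) (hS : S.IsHermitian)
    (hTG : T * G = 1) (hTS1 : T * T + S * S = 1) (hX : X.PosSemidef) (hB : B.PosSemidef)
    (hXB : X = G * B * G) {s : ℝ} (hs : 0 ≤ s) (w : ι → ℂ) :
    ∃ c : ℝ, 0 ≤ c ∧ (S *ᵥ (mR s B *ᵥ (B *ᵥ w)) = 0 → c = 0) ∧
      qf w (mK s B) - qf w (T * mK s X * T) =
      s * (∑ i, ‖(S *ᵥ (mR s B *ᵥ (B *ᵥ w))) i‖ ^ 2 + c) := by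
  have hGT : G * T = 1 := mul_eq_one_comm.1 hTG
  set R := mR s B with hR
  set R₁ := G * mR s X * G with hR₁
  have hGh : G.IsHermitian := by
    have : G = T⁻¹ := (inv_eq_left_inv hGT).symm
    rw [this]; exact hT.inv
  have hRh : R.IsHermitian := (mR_posDef hB hs).1
  have hR1p : R₁.PosSemidef := by
    have := (mR_posDef hX hs).posSemidef.conjTranspose_mul_mul_same G
    rwa [hGh.eq] at this
  have hTXT : T * X * T = B := by
    rw [hXB]
    calc _ = (T * G) * B * (G * T) := by simp only [Matrix.mul_assoc]
      _ = _ := by rw [hTG, hGT]; simp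
  have hQ : T * (1 + s • X) * T = T * T + s • B := by
    rw [← hTXT]; simp [mul_add, add_mul, Matrix.mul_assoc]
  have hR1 : R₁ * (T * T + s • B) = 1 := by
    rw [← hQ, hR₁]
    calc _ = G * (mR s X * ((G * T) * (1 + s • X))) * T := by simp only [Matrix.mul_assoc]
      _ = 1 := by rw [hGT, Matrix.one_mul, mR_mul hX hs, Matrix.mul_one, hGT]
  have hR2 : (T * T + s • B) * R₁ = 1 := mul_eq_one_comm.1 hR1
  have hTK : T * mK s X * T = B * R₁ * (T * T) := by
    rw [hR₁, ← hTXT, mK]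
    calc _ = T * X * (T * G) * mR s X * (G * T) * T := by
          rw [hTG, hGT]; simp only [Matrix.mul_one, Matrix.mul_assoc]
      _ = _ := by simp only [Matrix.mul_assoc]
  have hRB : R * (1 + s • B) = 1 := mR_mul hB hs
  have hBR : (1 + s • B) * R = 1 := mul_mR hB hs
  have hsum : (1 + s • B) = (T * T + s • B) + S * S := by rw [← hTS1]; abel
  have e1 : R₁ = R + R * (S * S) * R₁ := by
    calc R₁ = R * (1 + s • B) * R₁ := by rw [hRB, Matrix.one_mul]
      _ = R * ((T * T + s • B) * R₁) + R * (S * S) * R₁ := by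
        rw [hsum]; simp only [mul_add, add_mul, Matrix.mul_assoc]
      _ = _ := by rw [hR2, Matrix.mul_one]
  have e2 : R₁ = R + R₁ * (S * S) * R := by
    calc R₁ = R₁ * ((1 + s • B) * R) := by rw [hBR, Matrix.mul_one]
      _ = R₁ * (T * T + s • B) * R + R₁ * (S * S) * R := by
        rw [hsum]; simp only [mul_add, add_mul, Matrix.mul_assoc]
      _ = _ := by rw [hR1, Matrix.one_mul]
  have e3 : R₁ - R = R * (S * S) * R + R * (S * S) * R₁ * (S * S) * R := by
    calc R₁ - R = R * (S * S) * R₁ := by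
          rw [sub_eq_iff_eq_add, add_comm]; exact e1
      _ = R * (S * S) * (R + R₁ * (S * S) * R) := by rw [← e2]
      _ = _ := by simp only [mul_add, Matrix.mul_assoc]
  have e4 : mK s B - T * mK s X * T = s • (B * (R₁ - R) * B) := by
    have h1 : R₁ * (T * T) = 1 - s • (R₁ * B) := by
      rw [eq_sub_iff_add_eq, ← hR1, mul_add, Matrix.mul_smul]
    have h2 : R = 1 - s • (R * B) := by
      rw [eq_sub_iff_add_eq, ← hRB, mul_add, Matrix.mul_smul, Matrix.mul_one]
    rw [hTK, Matrix.mul_assoc, h1, mK, ← hR]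
    nth_rewrite 1 [h2]
    simp only [mul_sub, sub_mul, Matrix.mul_smul, Matrix.mul_one, Matrix.mul_assoc, smul_sub]
    abel
  have hBh : B.IsHermitian := hB.1
  refine ⟨qf ((S * S * R * B) *ᵥ w) R₁, qf_nonneg _ hR1p, fun h0 => ?_, ?_⟩
  · have : (S * S * R * B) *ᵥ w = 0 := by
      simp only [← mulVec_mulVec, h0, mulVec_zero]
    rw [this]; simp [qf_apply]
  · have h3 : s • (B * (R₁ - R) * B) = s • ((S * R * B)ᴴ * 1 * (S * R * B) +
        (S * S * R * B)ᴴ * R₁ * (S * S * R * B)) := by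
      rw [e3]
      simp only [conjTranspose_mul, hS.eq, hRh.eq, hBh.eq, mul_add, add_mul, Matrix.mul_assoc,
        Matrix.one_mul]
    rw [← map_sub, e4, h3, map_smul, map_add, qf_conj, qf_conj, qf_one, smul_eq_mul]
    simp only [mulVec_mulVec, Matrix.mul_assoc]

/-- The `n × n` matrix with entries `(1 + j i)⁻¹`, `1 ≤ i, j ≤ n`, is invertible: a vector in its
kernel gives, after clearing denominators, a polynomial in `s` of degree less than `n` with the `n`
roots `1, …, n`. -/
lemma exists_weights (n : ℕ) (hn : 1 ≤ n) : ∃ c : Fin n → ℝ,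
    (∀ j : ℕ, 1 ≤ j → j < n → ∑ i : Fin n, c i / (1 + j * ((i : ℝ) + 1)) = 0) ∧
    ∑ i : Fin n, c i / (1 + n * ((i : ℝ) + 1)) ≠ 0 := by
  classical
  let M : Matrix (Fin n) (Fin n) ℝ :=
    Matrix.of fun j i => (1 + ((j : ℝ) + 1) * ((i : ℝ) + 1))⁻¹
  have hMv : ∀ (c : Fin n → ℝ) (j : Fin n),
      (M *ᵥ c) j = ∑ i : Fin n, c i / (1 + ((j : ℝ) + 1) * ((i : ℝ) + 1)) := by
    intro c j
    simp only [mulVec, dotProduct, M, Matrix.of_apply, div_eq_mul_inv, mul_comm]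
  have hinj : Function.Injective M.mulVec := by
    refine (injective_iff_map_eq_zero M.mulVecLin).2 fun c hc => ?_
    let L : Fin n → Polynomial ℝ := fun k => 1 + Polynomial.C ((k : ℝ) + 1) * Polynomial.X
    have hL : ∀ (k : Fin n) (s : ℝ), (L k).eval s = 1 + s * ((k : ℝ) + 1) := fun k s => by
      simp only [L, Polynomial.eval_add, Polynomial.eval_one, Polynomial.eval_mul,
        Polynomial.eval_C, Polynomial.eval_X]
      ring
    have hLd : ∀ k, (L k).natDegree ≤ 1 := fun k => by
      have : (Polynomial.C ((k : ℝ) + 1) * Polynomial.X).natDegree ≤ 1 :=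
        (Polynomial.natDegree_C_mul_le _ _).trans Polynomial.natDegree_X_le
      exact (Polynomial.natDegree_add_le _ _).trans (by simpa using this)
    let N : Polynomial ℝ := ∑ i, Polynomial.C (c i) * ∏ k ∈ Finset.univ.erase i, L k
    have hNe : ∀ s : ℝ, N.eval s = ∑ i, c i * ∏ k ∈ Finset.univ.erase i, (1 + s * ((k : ℝ) + 1)) :=
      fun s => by
        simp only [N, Polynomial.eval_finsetSum, Polynomial.eval_mul, Polynomial.eval_C,
          Polynomial.eval_prod, hL]
    have hNd : N.natDegree < n := by
      refine lt_of_le_of_lt (Polynomial.natDegree_sum_le_of_forall_le (n := n - 1) _ _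
        fun i _ => ?_) (by omega)
      refine (Polynomial.natDegree_C_mul_le _ _).trans
        ((Polynomial.natDegree_prod_le _ _).trans ?_)
      refine (Finset.sum_le_card_nsmul _ _ 1 fun k _ => hLd k).trans ?_
      rw [Finset.card_erase_of_mem (Finset.mem_univ i)]
      simp
    have hN0 : N = 0 := by
      refine Polynomial.eq_zero_of_natDegree_lt_card_of_eval_eq_zero N
        (f := fun j : Fin n => (j : ℝ) + 1) (fun a b hab => ?_) (fun j => ?_) (by simpa using hNd)
      · simpa [Fin.val_inj] using hab
      · have h1 := congrFun hc j
        rw [mulVecLin_apply, hMv] at h1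
        rw [hNe]
        have h2 : ∀ i : Fin n, c i * ∏ k ∈ Finset.univ.erase i, (1 + ((j : ℝ) + 1) * ((k : ℝ) + 1)) =
            (∏ k : Fin n, (1 + ((j : ℝ) + 1) * ((k : ℝ) + 1))) *
              (c i / (1 + ((j : ℝ) + 1) * ((i : ℝ) + 1))) := fun i => by
          rw [← Finset.prod_erase_mul _ _ (Finset.mem_univ i)]
          have : 1 + ((j : ℝ) + 1) * ((i : ℝ) + 1) ≠ 0 := by positivity
          field_simp
        rw [Finset.sum_congr rfl fun i _ => h2 i, ← Finset.mul_sum, h1]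
        simp
    funext i
    have h3 := hNe (-((i : ℝ) + 1)⁻¹)
    have hi : ((i : ℝ) + 1) ≠ 0 := by positivity
    rw [hN0, Polynomial.eval_zero, Finset.sum_eq_single i] at h3
    · refine (mul_eq_zero.1 h3.symm).resolve_right (Finset.prod_ne_zero_iff.2 fun k hk => ?_)
      intro h0
      have : (k : ℝ) = i := by field_simp at h0; linarith
      exact (Finset.mem_erase.1 hk).1 (Fin.ext (by exact_mod_cast this))
    · intro b _ hb
      rw [Finset.prod_eq_zero (i := i) (Finset.mem_erase.2 ⟨hb.symm, Finset.mem_univ _⟩), mul_zero]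
      field_simp; ring
    · simp
  obtain ⟨c, hc⟩ := mulVec_surjective_iff_isUnit.2 (mulVec_injective_iff_isUnit.1 hinj)
    (Pi.single ⟨n - 1, by omega⟩ 1)
  refine ⟨c, fun j h1 hj => ?_, ?_⟩
  · have := congrFun hc ⟨j - 1, by omega⟩
    rw [hMv, Pi.single_eq_of_ne (by simp [Fin.ext_iff]; omega)] at this
    simpa [Nat.cast_sub h1] using this
  · have := congrFun hc ⟨n - 1, by omega⟩
    rw [hMv, Pi.single_eq_same] at this
    simp only [Nat.cast_sub hn, Nat.cast_one, sub_add_cancel] at this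
    rw [this]; exact one_ne_zero

/-- The function `ff n ε` violates Hansen's inequality on `n × n` matrices. Here `B = T X T` is
`diag(1, …, n)`, the defect `S` has rank one, and `w` is chosen such that the gap of
`mK_sub_compress` vanishes for `s = 0, …, n - 1` but not for `s = n`. The strict violation at `δ = 0`
persists for small `δ > 0`. -/
lemma exists_violation (n : ℕ) (hn : 1 ≤ n) {ε : ℝ} (hε : 0 < ε) :
    ∃ (T S X : Matrix (Fin n) (Fin n) ℂ) (w : Fin n → ℂ) (δ : ℝ),
      T.IsHermitian ∧ S.IsHermitian ∧ T * S = S * T ∧ T * T + S * S = 1 ∧ X.PosDef ∧ 0 < δ ∧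
      (T * X * T + δ • (2 : ℝ) • 1).PosDef ∧
      qf w (cfc (ff n ε) (T * X * T + δ • (2 : ℝ) • 1)) < qf w (T * cfc (ff n ε) X * T) := by
  have hn0 : (n : ℂ) ≠ 0 := by exact_mod_cast (by omega : n ≠ 0)
  obtain ⟨c, hc0, hc1⟩ := exists_weights n hn
  set p : Matrix (Fin n) (Fin n) ℂ := Matrix.of fun _ _ => (n : ℂ)⁻¹ with hp
  have hpp : p * p = p := by
    ext i j
    simp [hp, Matrix.mul_apply, hn0]
  have hph : p.IsHermitian := by
    ext i j
    simp [hp]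
  -- On the range of the projection `p`, `T`, `S` and `G = T⁻¹` act as `3/5`, `4/5` and `5/3`.
  set T : Matrix (Fin n) (Fin n) ℂ := 1 - (2 / 5 : ℝ) • p with hTd
  set S : Matrix (Fin n) (Fin n) ℂ := (4 / 5 : ℝ) • p with hSd
  set G : Matrix (Fin n) (Fin n) ℂ := 1 + (2 / 3 : ℝ) • p with hGd
  have hsm : ∀ r : ℝ, (r • p).IsHermitian := fun r => by
    rw [IsHermitian, conjTranspose_smul, hph.eq]; simp
  have hT : T.IsHermitian := isHermitian_one.sub (hsm _)
  have hS : S.IsHermitian := hsm _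
  have hG : G.IsHermitian := isHermitian_one.add (hsm _)
  have hTS : T * S = S * T := by
    simp only [hTd, hSd, mul_sub, sub_mul, Matrix.mul_one, Matrix.one_mul, Matrix.smul_mul,
      Matrix.mul_smul, hpp]
    module
  have hTS1 : T * T + S * S = 1 := by
    simp only [hTd, hSd, mul_sub, sub_mul, Matrix.mul_one, Matrix.one_mul, Matrix.smul_mul,
      Matrix.mul_smul, hpp]
    module
  have hTG : T * G = 1 := by
    simp only [hTd, hGd, mul_add, sub_mul, Matrix.mul_one, Matrix.one_mul, Matrix.smul_mul,
      Matrix.mul_smul, hpp]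
    module
  have hGT : G * T = 1 := mul_eq_one_comm.1 hTG
  set B : Matrix (Fin n) (Fin n) ℂ := diagonal fun i => (((i : ℝ) + 1 : ℝ) : ℂ) with hBd
  have hB : B.PosDef := by
    refine PosDef.diagonal fun i => ?_
    rw [Complex.zero_lt_real]; positivity
  set X : Matrix (Fin n) (Fin n) ℂ := G * B * G with hXd
  have hX : X.PosDef := by
    have := hB.conjTranspose_mul_mul_same (B := G)
      (mulVec_injective_of_isUnit ⟨⟨G, T, hGT, hTG⟩, rfl⟩)
    rwa [hG.eq] at this
  have hTXT : T * X * T = B := by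
    calc _ = (T * G) * B * (G * T) := by simp only [hXd, Matrix.mul_assoc]
      _ = _ := by rw [hTG, hGT]; simp
  set w : Fin n → ℂ := fun i => ((c i / ((i : ℝ) + 1) : ℝ) : ℂ) with hw
  have hSv : ∀ j : ℕ, S *ᵥ (mR (j : ℝ) B *ᵥ (B *ᵥ w)) = fun _ =>
      (((4 / 5) * (n : ℝ)⁻¹ * ∑ i : Fin n, c i / (1 + j * ((i : ℝ) + 1)) : ℝ) : ℂ) := by
    intro j
    have e1 : mR (j : ℝ) B = diagonal fun i : Fin n => (((1 + j * ((i : ℝ) + 1))⁻¹ : ℝ) : ℂ) := by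
      refine inv_eq_left_inv ?_
      rw [hBd, ← diagonal_one, ← diagonal_smul, diagonal_add, diagonal_mul_diagonal]
      congr 1
      funext i
      have h : (1 + (j : ℝ) * ((i : ℝ) + 1)) ≠ 0 := by positivity
      have := inv_mul_cancel₀ h
      simpa [mul_add] using congrArg (fun r : ℝ => (r : ℂ)) this
    have e2 : mR (j : ℝ) B *ᵥ (B *ᵥ w) = fun i : Fin n =>
        ((c i / (1 + j * ((i : ℝ) + 1)) : ℝ) : ℂ) := by
      rw [e1]
      funext i
      rw [mulVec_diagonal, hBd, mulVec_diagonal, hw, ← Complex.ofReal_mul, ← Complex.ofReal_mul]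
      congr 1
      field_simp
    rw [e2]
    funext i
    rw [hSd, smul_mulVec, Pi.smul_apply, Complex.real_smul]
    simp only [hp, mulVec, dotProduct, Matrix.of_apply, ← Finset.mul_sum]
    push_cast
    ring
  have hstrict : qf w (mF n ε B) < qf w (T * mF n ε X * T) := by
    have e : T * mF n ε X * T = ∑ j ∈ Finset.range n, T * mK (j : ℝ) X * T -
        ε • (T * mK (n : ℝ) X * T) := by
      simp [mF, mul_sub, sub_mul, Finset.mul_sum, Finset.sum_mul]
    have h0 : ∀ j ∈ Finset.range n, qf w (mK (j : ℝ) B) = qf w (T * mK (j : ℝ) X * T) := by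
      intro j hj
      obtain ⟨a, -, ha, he⟩ := mK_sub_compress hT hS hTG hTS1 hX.posSemidef hB.posSemidef hXd
        (Nat.cast_nonneg j) w
      rcases Nat.eq_zero_or_pos j with rfl | hj0
      · rw [← sub_eq_zero, he]; simp
      · have hz : S *ᵥ (mR (j : ℝ) B *ᵥ (B *ᵥ w)) = 0 := by
          rw [hSv, hc0 j hj0 (Finset.mem_range.1 hj)]; funext i; simp
        rw [← sub_eq_zero, he, ha hz, hz]; simp
    have h1 : qf w (T * mK (n : ℝ) X * T) < qf w (mK (n : ℝ) B) := by
      obtain ⟨a, ha, -, he⟩ := mK_sub_compress hT hS hTG hTS1 hX.posSemidef hB.posSemidef hXd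
        (Nat.cast_nonneg n) w
      rw [← sub_pos, he, hSv]
      have hnp : (0 : ℝ) < n := by exact_mod_cast hn
      refine mul_pos hnp (add_pos_of_pos_of_nonneg ?_ ha)
      refine Finset.sum_pos (fun i _ => pow_pos (norm_pos_iff.2 ?_) 2)
        ⟨⟨0, by omega⟩, Finset.mem_univ _⟩
      rw [Complex.ofReal_ne_zero]
      exact mul_ne_zero (by positivity) hc1
    rw [e, mF, map_sub, map_sub, map_sum, map_sum, Finset.sum_congr rfl h0, map_smul, map_smul]
    exact sub_lt_sub_left (mul_lt_mul_of_pos_left h1 hε) _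
  have h2 : ((2 : ℝ) • (1 : Matrix (Fin n) (Fin n) ℂ)).PosDef := PosDef.one.smul two_pos
  have hcont : ContinuousAt (fun δ : ℝ => qf w (mF n ε (B + δ • (2 : ℝ) • 1))) 0 := by
    refine (continuous_qf w).continuousAt.comp ?_
    have hk : ∀ j : ℕ, ContinuousAt (fun δ : ℝ => mK (j : ℝ) (B + δ • (2 : ℝ) • 1)) 0 := fun j =>
      continuousAt_mK hB.posSemidef h2.posSemidef le_rfl j.cast_nonneg
    exact (tendsto_finsetSum _ fun j _ => hk j).sub ((hk n).const_smul ε)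
  have hev := hcont.eventually_lt (continuousAt_const (y := qf w (T * mF n ε X * T)))
    (by simpa using hstrict)
  obtain ⟨δ, hδ, hδ0⟩ := ((hev.filter_mono nhdsWithin_le_nhds).and
    (self_mem_nhdsWithin (s := Ioi (0 : ℝ)))).exists
  have hBδ : (B + δ • (2 : ℝ) • 1).PosDef := hB.add (h2.smul hδ0)
  refine ⟨T, S, X, w, δ, hT, hS, hTS, hTS1, hX, hδ0, ?_, ?_⟩
  · rwa [hTXT]
  · rwa [hTXT, cfc_ff n ε hBδ.posSemidef, cfc_ff n ε hX.posSemidef]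

/-- Proposition 2.3: `C_{2n}([0,∞)) ⊊ Pₙ⁺([0,∞))`. For each `n ≥ 1` there is a continuous
function `f` on `[0,∞)`, positive on `(0,∞)` and matrix monotone of order `n` there, together
with `2n` points of `(0,∞)` at which no positive operator monotone function on `(0,∞)`
interpolates `f`. -/
theorem stmt_4 (n : ℕ) (hn : 1 ≤ n) :
    ∃ f : ℝ → ℝ, ContinuousOn f (Ici (0:ℝ)) ∧ f '' Ioi (0:ℝ) ⊆ Ioi (0:ℝ) ∧
      MatrixMonotoneOn n f (Ici (0:ℝ)) ∧
      ∃ lam : Fin (2 * n) → ℝ, (∀ i, lam i ∈ Ioi (0:ℝ)) ∧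
        ¬ ∃ h : ℝ → ℝ, (∀ k : ℕ, MatrixMonotoneOn k h (Ioi (0:ℝ))) ∧
          h '' Ioi (0:ℝ) ⊆ Ioi (0:ℝ) ∧ ∀ i, h (lam i) = f (lam i) := by
  set C : ℝ := ∑ j ∈ Finset.range n, (n.choose j : ℝ) ^ 2 with hC
  have hC0 : 0 < C :=
    Finset.sum_pos (fun j hj => pow_pos (by
      exact_mod_cast Nat.choose_pos (Finset.mem_range.1 hj).le) 2) ⟨0, Finset.mem_range.2 hn⟩
  set ε : ℝ := (1 + C)⁻¹ with hεd
  have hε : 0 < ε := by positivity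
  have hε1 : ε < 1 := inv_lt_one_of_one_lt₀ (by linarith)
  have hεC : ε * C ≤ 1 := by
    rw [hεd, inv_mul_le_one₀ (by positivity)]; linarith
  obtain ⟨T, S, X, w, δ, hT, hS, hTS, hTS1, hX, hδ, hB, hlt⟩ := exists_violation n hn hε
  have hden : ∀ (j : ℕ) {t : ℝ}, 0 ≤ t → 0 < 1 + j * t := fun j t ht => by positivity
  refine ⟨ff n ε, ?_, ?_, matrixMonotoneOn_ff n hε.le hεC, ?_⟩
  · have hk : ∀ j : ℕ, ContinuousOn (fun t : ℝ => t / (1 + j * t)) (Ici 0) := fun j =>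
      continuousOn_id.div (by fun_prop) fun t ht => (hden j ht).ne'
    exact (continuousOn_finsetSum _ fun j _ => hk j).sub (continuousOn_const.mul (hk n))
  · rintro _ ⟨t, ht, rfl⟩
    have ht0 : 0 < t := ht
    have h1 : t ≤ ∑ j ∈ Finset.range n, t / (1 + j * t) := by
      have := Finset.single_le_sum (f := fun j : ℕ => t / (1 + j * t))
        (fun j _ => div_nonneg ht0.le (hden j ht0.le).le) (Finset.mem_range.2 hn)
      simpa using this
    have h2 : t / (1 + n * t) ≤ t := div_le_self ht0.le (by
      have : (0 : ℝ) ≤ n * t := by positivity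
      linarith)
    have h3 : ε * (t / (1 + n * t)) < t := (mul_le_mul_of_nonneg_left h2 hε.le).trans_lt
      (by nlinarith)
    exact sub_pos.2 (h3.trans_le h1)
  -- The interpolation points are the eigenvalues of the two matrices in Hansen's inequality.
  · let e : Fin (2 * n) ≃ Fin n ⊕ Fin n := (finCongr (two_mul n)).trans finSumFinEquiv.symm
    refine ⟨fun i => Sum.elim hX.1.eigenvalues hB.1.eigenvalues (e i), fun i => ?_, ?_⟩
    · change Sum.elim hX.1.eigenvalues hB.1.eigenvalues (e i) ∈ Ioi 0
      rcases e i with k | k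
      · exact hX.eigenvalues_pos k
      · exact hB.eigenvalues_pos k
    · rintro ⟨h, hmono, hpos, heq⟩
      have eX : cfc h X = cfc (ff n ε) X := by
        refine cfc_congr fun t ht => ?_
        rw [hX.1.spectrum_real_eq_range_eigenvalues] at ht
        obtain ⟨k, rfl⟩ := ht
        simpa using heq (e.symm (Sum.inl k))
      have eB := cfc_congr (a := T * X * T + δ • (2 : ℝ) • 1) (f := h) (g := ff n ε)
        fun t ht => by
          rw [hB.1.spectrum_real_eq_range_eigenvalues] at ht
          obtain ⟨k, rfl⟩ := ht
          simpa using heq (e.symm (Sum.inr k))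
      have key := qf_nonneg w (hansen hmono hpos hT hS hTS hTS1 hX hδ)
      rw [eX, eB, map_sub] at key
      linarith
end

section
/- Let n ≥ 1, let 0 < α ≤ ∞, and let f : [0,α) → ℝ be continuous. Define g(t) = f(t)/t for t ∈ (0,α). Then the following are equivalent: (ii) for every n×n positive semidefinite complex matrix a with all eigenvalues in [0,α) and every n×n complex matrix c with c*c ≤ 1, one has f(c*ac) ≤ c* f(a) c in the Loewner order; (iii) g is matrix monotone of order n on (0,α). -/
/-!
Write `g(t) = f(t)/t`. All spectra are finite, so the functional calculus is given by interpolating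
polynomials; in particular `g(xxᴴ) x = x g(xᴴx)` (`cfc_intertwine`).

If the Jensen inequality holds and `0 < A ≤ B`, then `c = B^{-1/2} A^{1/2}` is a contraction with
`cᴴBc = A`, so `A^{1/2} g(A) A^{1/2} = f(A) ≤ cᴴ f(B) c = A^{1/2} g(B) A^{1/2}`, and `A^{1/2}`
cancels (`monotone_of_jensen`).

Conversely, let `g` be monotone and `a`, `c` invertible. With `x = a^{1/2} c` one has `xxᴴ ≤ a`,
hence `g(xxᴴ) ≤ g(a)`, and conjugating by `x` gives
`f(cᴴac) = xᴴx g(xᴴx) = xᴴ g(xxᴴ) x ≤ xᴴ g(a) x = cᴴ f(a) c` (`jensen_of_unit`). The general case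
follows by approximating `a` by `a + d` and `c` by `(c + d)/(1 + d)` and using that the functional
calculus of the continuous function `f` is continuous on Hermitian matrices with spectrum in a fixed
compact interval (`jensen_of_monotone`).
-/

open Matrix Set MeasureTheory
open scoped ComplexOrder

open scoped MatrixOrder Matrix.Norms.L2Operator Topology

/-- A matrix intertwining two Hermitian matrices intertwines their functional calculi: on the two
finite spectra `g` agrees with an interpolating polynomial. -/
theorem cfc_intertwine {n : ℕ} {M N x : Matrix (Fin n) (Fin n) ℂ} (hM : M.IsHermitian)
    (hN : N.IsHermitian) (h : M * x = x * N) (g : ℝ → ℝ) : cfc g M * x = x * cfc g N := by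
  classical
  set S := (Matrix.finite_real_spectrum (A := M)).toFinset ∪
    (Matrix.finite_real_spectrum (A := N)).toFinset with hS
  set p : Polynomial ℝ := Lagrange.interpolate S id g with hp
  have key : ∀ t ∈ S, p.eval t = g t := fun t ht =>
    Lagrange.eval_interpolate_at_node (v := id) g (Function.injective_id.injOn) ht
  have hM' : cfc g M = Polynomial.aeval M p := by
    rw [← cfc_polynomial p M hM.isSelfAdjoint]
    exact cfc_congr fun t ht => (key t (by simp [hS, ht])).symm
  have hN' : cfc g N = Polynomial.aeval N p := by
    rw [← cfc_polynomial p N hN.isSelfAdjoint]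
    exact cfc_congr fun t ht => (key t (by simp [hS, ht])).symm
  rw [hM', hN']
  clear_value p
  clear hM' hN' key hp
  induction p using Polynomial.induction_on' with
  | add p q hp hq => simp [add_mul, mul_add, hp, hq]
  | monomial k r =>
    have hk : M ^ k * x = x * N ^ k := by
      induction k with
      | zero => simp
      | succ k ih => rw [pow_succ, pow_succ, mul_assoc, h, ← mul_assoc, ih, mul_assoc]
    simp [Polynomial.aeval_monomial, ← Algebra.smul_def, hk]

theorem cfc_eq_mul_cfc_div {n : ℕ} {a : Matrix (Fin n) (Fin n) ℂ} (ha : a.IsHermitian)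
    (h0 : ∀ t ∈ spectrum ℝ a, 0 < t) (f : ℝ → ℝ) :
    cfc f a = a * cfc (fun t => f t / t) a := by
  have hfin := Matrix.finite_real_spectrum (A := a)
  have h1 : cfc f a = cfc (fun t : ℝ => t * (f t / t)) a :=
    cfc_congr fun t ht => by have := (h0 t ht).ne'; field_simp
  rw [h1, cfc_mul _ _ a (hfin.continuousOn _) (hfin.continuousOn _),
    cfc_id' ℝ a ha.isSelfAdjoint]

/-- With `g(t) = f(t)/t` and `s` a square root of `a`, `f(a) = s g(a) s`. -/
theorem cfc_eq_conj {n : ℕ} {a s : Matrix (Fin n) (Fin n) ℂ} (ha : a.IsHermitian)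
    (hs : s * s = a) (h0 : ∀ t ∈ spectrum ℝ a, 0 < t) (f : ℝ → ℝ) :
    cfc f a = s * cfc (fun t => f t / t) a * s := by
  have h : a * s = s * a := by rw [← hs, mul_assoc]
  rw [mul_assoc, cfc_intertwine ha ha h, ← mul_assoc, hs, cfc_eq_mul_cfc_div ha h0]

/-- If `cᴴ` is a contraction, so is `c`, because
`1 - cᴴc = cᴴ(1 - ccᴴ)c + (1 - cᴴc)²`. -/
theorem contraction_swap {n : ℕ} {c : Matrix (Fin n) (Fin n) ℂ}
    (h : (1 - c * cᴴ).PosSemidef) : (1 - cᴴ * c).PosSemidef := by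
  have h1 := h.conjTranspose_mul_mul_same c
  have h2 := Matrix.posSemidef_conjTranspose_mul_self (1 - cᴴ * c)
  convert h1.add h2 using 1
  simp only [conjTranspose_sub, conjTranspose_one, conjTranspose_mul, conjTranspose_conjTranspose]
  noncomm_ring

theorem exists_sqrt {n : ℕ} {a : Matrix (Fin n) (Fin n) ℂ} (ha : a.PosDef) :
    ∃ s : Matrix (Fin n) (Fin n) ℂ, sᴴ = s ∧ s * s = a ∧ IsUnit s := by
  have h : CFC.sqrt a * CFC.sqrt a = a := CFC.sqrt_mul_sqrt_self a ha.posSemidef.nonneg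
  refine ⟨CFC.sqrt a, (CFC.sqrt_nonneg a).posSemidef.1, h, ?_⟩
  have := ha.isUnit
  rw [← h] at this
  exact isUnit_of_mul_isUnit_left this

theorem posDef_iff_spectrum {n : ℕ} {a : Matrix (Fin n) (Fin n) ℂ} (ha : a.IsHermitian) :
    a.PosDef ↔ ∀ t ∈ spectrum ℝ a, 0 < t := by
  rw [ha.posDef_iff_eigenvalues_pos, ha.spectrum_real_eq_range_eigenvalues]
  simp

/-- The Jensen inequality implies monotonicity of `f(t)/t`: for `0 < A ≤ B` it is applied to `B` and
the contraction `c = B^{-1/2} A^{1/2}`, for which `cᴴ B c = A`. -/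
theorem monotone_of_jensen {n : ℕ} {J I : Set ℝ} {f : ℝ → ℝ} (hIJ : I ⊆ J)
    (hI : ∀ t ∈ I, 0 < t)
    (H : ∀ a c : Matrix (Fin n) (Fin n) ℂ, a.PosSemidef → spectrum ℝ a ⊆ J →
        (1 - cᴴ * c).PosSemidef →
        (cᴴ * cfc f a * c - cfc f (cᴴ * a * c)).PosSemidef) :
    MatrixMonotoneOn n (fun t => f t / t) I := by
  intro A B hA hB hAI hBI hAB
  have hA0 := fun t ht => hI t (hAI ht)
  have hB0 := fun t ht => hI t (hBI ht)
  have hBpos := (posDef_iff_spectrum hB).2 hB0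
  obtain ⟨s, hs, hsA, hsu⟩ := exists_sqrt ((posDef_iff_spectrum hA).2 hA0)
  obtain ⟨r, hr, hrB, hru⟩ := exists_sqrt hBpos
  obtain ⟨u, hu1, hu2⟩ := isUnit_iff_exists.1 hru
  obtain ⟨v, hv1, hv2⟩ := isUnit_iff_exists.1 hsu
  have hu : uᴴ = u := by
    have h1 : uᴴ * r = 1 := by rw [← hr, ← conjTranspose_mul, hu1, conjTranspose_one]
    calc uᴴ = uᴴ * (r * u) := by rw [hu1, mul_one]
      _ = u := by rw [← mul_assoc, h1, one_mul]
  have hv : vᴴ = v := by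
    have h1 : vᴴ * s = 1 := by rw [← hs, ← conjTranspose_mul, hv1, conjTranspose_one]
    calc vᴴ = vᴴ * (s * v) := by rw [hv1, mul_one]
      _ = v := by rw [← mul_assoc, h1, one_mul]
  have hc : (u * s)ᴴ = s * u := by rw [conjTranspose_mul, hu, hs]
  have hcontr : (1 - (u * s)ᴴ * (u * s)).PosSemidef := by
    apply contraction_swap
    convert hAB.conjTranspose_mul_mul_same u using 1
    rw [hc, hu, ← hsA, ← hrB, mul_sub, sub_mul]
    have : u * (r * r) * u = 1 := by
      rw [← mul_assoc, hu2, one_mul, hu1]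
    rw [this]
    simp only [mul_assoc]
  have hcB : (u * s)ᴴ * B * (u * s) = A := by
    rw [hc, ← hrB, ← hsA]
    calc s * u * (r * r) * (u * s) = s * (u * r) * (r * u) * s := by simp only [mul_assoc]
      _ = s * s := by rw [hu1, hu2, mul_one, mul_one]
  have key := (H B (u * s) hBpos.posSemidef (hBI.trans hIJ) hcontr).conjTranspose_mul_mul_same v
  rw [hcB, cfc_eq_conj hB hrB hB0, cfc_eq_conj hA hsA hA0, hc, hv] at key
  convert key using 1
  set P := cfc (fun t => f t / t) B
  set Q := cfc (fun t => f t / t) A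
  calc P - Q = (v * s) * (u * r) * P * (r * u) * (s * v) - (v * s) * Q * (s * v) := by
        simp [hu1, hu2, hv1, hv2]
    _ = _ := by simp only [mul_sub, sub_mul, mul_assoc]

theorem posSemidef_smul_one_sub_iff {n : ℕ} {a : Matrix (Fin n) (Fin n) ℂ} (ha : a.IsHermitian) {b : ℝ} :
    (b • (1 : Matrix (Fin n) (Fin n) ℂ) - a).PosSemidef ↔ ∀ t ∈ spectrum ℝ a, t ≤ b := by
  rw [← le_algebraMap_iff_spectrum_le ha.isSelfAdjoint, Algebra.algebraMap_eq_smul_one,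
    Matrix.le_iff]

theorem conj_spectrum_le {n : ℕ} {a c : Matrix (Fin n) (Fin n) ℂ} (ha : a.IsHermitian) {b : ℝ}
    (hb : 0 ≤ b) (hab : ∀ t ∈ spectrum ℝ a, t ≤ b) (hc : (1 - cᴴ * c).PosSemidef) :
    ∀ t ∈ spectrum ℝ (cᴴ * a * c), t ≤ b := by
  rw [← posSemidef_smul_one_sub_iff (isHermitian_conjTranspose_mul_mul c ha)]
  rw [← posSemidef_smul_one_sub_iff ha] at hab
  convert (hab.conjTranspose_mul_mul_same c).add (hc.smul hb) using 1
  simp only [mul_sub, sub_mul, smul_sub, mul_smul_comm, smul_mul_assoc, mul_one]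
  abel

/-- Monotonicity of `f(t)/t` implies the Jensen inequality for invertible `a` and `c`: with
`x = a^{1/2} c`, monotonicity is applied to `x xᴴ ≤ a` and the result is conjugated by `x`. -/
theorem jensen_of_unit {n : ℕ} {I : Set ℝ} {f : ℝ → ℝ} {b : ℝ} (hI : ∀ t, 0 < t → t ≤ b → t ∈ I)
    (H : MatrixMonotoneOn n (fun t => f t / t) I)
    {a c : Matrix (Fin n) (Fin n) ℂ} (ha : a.PosDef) (hab : ∀ t ∈ spectrum ℝ a, t ≤ b)
    (hc : (1 - cᴴ * c).PosSemidef) (hcu : IsUnit c) :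
    (cᴴ * cfc f a * c - cfc f (cᴴ * a * c)).PosSemidef := by
  have ha0 := (posDef_iff_spectrum ha.1).1 ha
  obtain ⟨s, hs, hsa, hsu⟩ := exists_sqrt ha
  have hx : (s * c)ᴴ = cᴴ * s := by rw [conjTranspose_mul, hs]
  have hxx : (s * c)ᴴ * (s * c) = cᴴ * a * c := by rw [hx, ← hsa]; simp only [mul_assoc]
  have hxu : IsUnit (s * c) := hsu.mul hcu
  have hxu' : IsUnit (s * c)ᴴ := hxu.star
  have hp1 : ((s * c)ᴴ * (s * c)).PosDef :=
    (posSemidef_conjTranspose_mul_self _).posDef_iff_isUnit.2 (hxu'.mul hxu)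
  have hp2 : ((s * c) * (s * c)ᴴ).PosDef :=
    (posSemidef_self_mul_conjTranspose _).posDef_iff_isUnit.2 (hxu.mul hxu')
  have hc' : (1 - c * cᴴ).PosSemidef := by
    have := contraction_swap (c := cᴴ) (by simpa using hc)
    simpa using this
  have hle : (a - (s * c) * (s * c)ᴴ).PosSemidef := by
    convert hc'.conjTranspose_mul_mul_same s using 1
    rw [hx, hs, ← hsa]
    simp only [mul_sub, sub_mul, mul_assoc, mul_one]
  have h20 := (posDef_iff_spectrum hp2.1).1 hp2
  have h2b : ∀ t ∈ spectrum ℝ ((s * c) * (s * c)ᴴ), t ≤ b := by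
    rw [← posSemidef_smul_one_sub_iff hp2.1]
    convert ((posSemidef_smul_one_sub_iff ha.1).2 hab).add hle using 1
    abel
  have key := (H _ _ hp2.1 ha.1 (fun t ht => hI t (h20 t ht) (h2b t ht))
    (fun t ht => hI t (ha0 t ht) (hab t ht)) hle).conjTranspose_mul_mul_same (s * c)
  convert key using 1
  rw [← hxx, cfc_eq_mul_cfc_div hp1.1 ((posDef_iff_spectrum hp1.1).1 hp1), mul_sub, sub_mul,
    mul_assoc (s * c)ᴴ (cfc _ (s * c * (s * c)ᴴ)),
    cfc_intertwine hp2.1 hp1.1 (mul_assoc _ _ _), cfc_eq_conj ha.1 hsa ha0, hx]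
  simp only [mul_assoc]

/-- If `c` is a contraction and `d ≥ 0`, then `(c + d)/(1 + d)` is a contraction, because
`(1 + d)² - (c + d)ᴴ(c + d) = (1 - cᴴc) + d ((1 - c)ᴴ(1 - c) + (1 - cᴴc))`. -/
theorem contraction_perturb {n : ℕ} {c : Matrix (Fin n) (Fin n) ℂ} (hc : (1 - cᴴ * c).PosSemidef)
    {d : ℝ} (hd : 0 ≤ d) :
    (1 - ((1 + d)⁻¹ • (c + d • 1))ᴴ * ((1 + d)⁻¹ • (c + d • 1))).PosSemidef := by
  have h1 : (0 : ℝ) < 1 + d := by positivity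
  have h2 := Matrix.posSemidef_conjTranspose_mul_self (1 - c)
  convert ((hc.add ((h2.add hc).smul hd)).smul (a := ((1 + d)⁻¹ ^ 2)) (by positivity)) using 1
  have e : (1 : Matrix (Fin n) (Fin n) ℂ) = ((1 + d)⁻¹ ^ 2) • ((1 + d) ^ 2) • 1 := by
    rw [smul_smul, ← mul_pow, inv_mul_cancel₀ h1.ne', one_pow, one_smul]
  have e2 : ((1 + d)⁻¹ • (c + d • 1))ᴴ * ((1 + d)⁻¹ • (c + d • 1)) =
      ((1 + d)⁻¹ ^ 2) • ((c + d • 1)ᴴ * (c + d • 1)) := by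
    rw [conjTranspose_smul, smul_mul_smul_comm, star_trivial, sq]
  rw [e2]
  nth_rewrite 1 [e]
  rw [← smul_sub]
  congr 1
  simp only [conjTranspose_add, conjTranspose_sub, conjTranspose_smul, conjTranspose_one,
    star_trivial, mul_add, add_mul, mul_sub, sub_mul, smul_mul_assoc, mul_smul_comm, mul_one,
    one_mul]
  module

theorem eventually_isUnit {n : ℕ} (c : Matrix (Fin n) (Fin n) ℂ) :
    ∀ᶠ d : ℝ in 𝓝[>] 0, IsUnit (c + d • 1) := by
  have hfin : (spectrum ℝ (-c) \ {0}).Finite :=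
    (Matrix.finite_real_spectrum (A := -c)).subset sdiff_subset
  have : ∀ᶠ d : ℝ in 𝓝[>] 0, d ∈ (spectrum ℝ (-c) \ {0})ᶜ :=
    nhdsWithin_le_nhds (hfin.isClosed.isOpen_compl.mem_nhds (by simp))
  filter_upwards [this, self_mem_nhdsWithin] with d hd hd0
  by_contra hcon
  refine hd ⟨?_, (ne_of_gt hd0)⟩
  rw [spectrum.mem_iff, Algebra.algebraMap_eq_smul_one, sub_neg_eq_add, add_comm]
  exact hcon

/-- The Jensen inequality for arbitrary `a` and `c`, as the limit `d → 0+` of the invertible case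
for `a + d` and `(c + d)/(1 + d)`. The number `b'` leaves room above the spectrum of `a`, so all
spectra involved stay in the compact interval `[0, b']` on which `f` is continuous. -/
theorem jensen_of_monotone {n : ℕ} {I : Set ℝ} {f : ℝ → ℝ} {b b' : ℝ} (hb : 0 ≤ b) (hbb : b < b')
    (hI : ∀ t, 0 < t → t ≤ b' → t ∈ I) (hf : ContinuousOn f (Icc 0 b'))
    (H : MatrixMonotoneOn n (fun t => f t / t) I)
    {a c : Matrix (Fin n) (Fin n) ℂ} (ha : a.PosSemidef) (hab : ∀ t ∈ spectrum ℝ a, t ≤ b)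
    (hc : (1 - cᴴ * c).PosSemidef) :
    (cᴴ * cfc f a * c - cfc f (cᴴ * a * c)).PosSemidef := by
  have hspec : ∀ m : Matrix (Fin n) (Fin n) ℂ, m.PosSemidef → (∀ t ∈ spectrum ℝ m, t ≤ b') →
      spectrum ℝ m ⊆ Icc 0 b' := fun m hm h t ht =>
    ⟨spectrum_nonneg_of_nonneg hm.nonneg ht, h t ht⟩
  set A : ℝ → Matrix (Fin n) (Fin n) ℂ := fun d => a + d • 1 with hA
  set C : ℝ → Matrix (Fin n) (Fin n) ℂ := fun d => (1 + d)⁻¹ • (c + d • 1) with hC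
  have hA0 : A 0 = a := by simp [hA]
  have hC0 : C 0 = c := by simp [hC]
  have hAt : Filter.Tendsto A (𝓝[>] 0) (𝓝 a) := by
    have : ContinuousAt A 0 := by fun_prop
    simpa [ContinuousAt, hA0] using this.tendsto.mono_left nhdsWithin_le_nhds
  have hCt : Filter.Tendsto C (𝓝[>] 0) (𝓝 c) := by
    have : ContinuousAt C 0 := by
      have h1 : ContinuousAt (fun d : ℝ => (1 + d)⁻¹) 0 :=
        ContinuousAt.inv₀ (by fun_prop) (by simp)
      have h2 : ContinuousAt (fun d : ℝ => c + d • (1 : Matrix (Fin n) (Fin n) ℂ)) 0 := by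
        fun_prop
      exact h1.smul h2
    simpa [ContinuousAt, hC0] using this.tendsto.mono_left nhdsWithin_le_nhds
  have hCst : Filter.Tendsto (fun d => (C d)ᴴ) (𝓝[>] 0) (𝓝 cᴴ) := hCt.star
  have hCc : ∀ d, 0 < d → (1 - (C d)ᴴ * C d).PosSemidef := fun d hd => contraction_perturb hc hd.le
  have hApos : ∀ d, 0 < d → (A d).PosDef := fun d hd =>
    PosDef.posSemidef_add ha (PosDef.one.smul hd)
  have hsmall : ∀ᶠ d : ℝ in 𝓝[>] 0, 0 < d ∧ d < b' - b := by
    filter_upwards [Ioo_mem_nhdsGT (sub_pos.2 hbb)] with d hd using hd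
  have hAb : ∀ d, 0 < d ∧ d < b' - b → ∀ t ∈ spectrum ℝ (A d), t ≤ b' := by
    intro d hd
    rw [← posSemidef_smul_one_sub_iff (hApos d hd.1).1]
    rw [← posSemidef_smul_one_sub_iff ha.1] at hab
    convert hab.add ((PosSemidef.one (n := Fin n) (R := ℂ)).smul
      (a := b' - b - d) (by linarith [hd.2])) using 1
    simp only [hA]
    module
  have hab' : ∀ t ∈ spectrum ℝ a, t ≤ b' := fun t ht => (hab t ht).trans hbb.le
  have hb' : 0 ≤ b' := hb.trans hbb.le
  have t1 : Filter.Tendsto (fun d => cfc f (A d)) (𝓝[>] 0) (𝓝 (cfc f a)) :=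
    Filter.Tendsto.cfc isCompact_Icc f hAt
      (hsmall.mono fun d hd => hspec _ (hApos d hd.1).posSemidef (hAb d hd))
      (hsmall.mono fun d hd => (hApos d hd.1).1.isSelfAdjoint) (hspec a ha hab')
      ha.1.isSelfAdjoint hf
  have t2 : Filter.Tendsto (fun d => cfc f ((C d)ᴴ * A d * C d)) (𝓝[>] 0)
      (𝓝 (cfc f (cᴴ * a * c))) := by
    refine Filter.Tendsto.cfc isCompact_Icc f ((hCst.mul hAt).mul hCt)
      (hsmall.mono fun d hd => hspec _ ?_ ?_) (hsmall.mono fun d hd => ?_) (hspec _ ?_ ?_) ?_ hf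
    · exact (hApos d hd.1).posSemidef.conjTranspose_mul_mul_same _
    · exact conj_spectrum_le (hApos d hd.1).1 hb' (hAb d hd) (hCc d hd.1)
    · exact ((hApos d hd.1).posSemidef.conjTranspose_mul_mul_same _).1.isSelfAdjoint
    · exact ha.conjTranspose_mul_mul_same _
    · exact conj_spectrum_le ha.1 hb' hab' hc
    · exact (ha.conjTranspose_mul_mul_same _).1.isSelfAdjoint
  rw [← nonneg_iff_posSemidef]
  refine ge_of_tendsto (((hCst.mul t1).mul hCt).sub t2) ?_
  filter_upwards [hsmall, eventually_isUnit c] with d hd hu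
  rw [nonneg_iff_posSemidef]
  refine jensen_of_unit hI H (hApos d hd.1) (hAb d hd) (hCc d hd.1) ?_
  have h1 : (1 + d)⁻¹ ≠ 0 := by have := hd.1; positivity
  exact hu.smul (Units.mk0 _ h1)

/-- Theorem 3.1: for `0 < α ≤ ∞` (here `α : EReal`), a continuous `f : [0,α) → ℝ` satisfies the
Jensen-type operator inequality (ii) at level `n` if and only if `g(t) = f(t)/t` is matrix
monotone of order `n` on `(0,α)` (assertion (iii)). -/
theorem stmt_5 (n : ℕ) (hn : 1 ≤ n) (α : EReal) (hα : 0 < α) (f : ℝ → ℝ)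
    (hfc : ContinuousOn f {x : ℝ | 0 ≤ x ∧ (x : EReal) < α}) :
    (∀ a c : Matrix (Fin n) (Fin n) ℂ, a.PosSemidef →
        spectrum ℝ a ⊆ {x : ℝ | 0 ≤ x ∧ (x : EReal) < α} →
        (1 - cᴴ * c).PosSemidef →
        (cᴴ * cfc f a * c - cfc f (cᴴ * a * c)).PosSemidef) ↔
      MatrixMonotoneOn n (fun t => f t / t) {x : ℝ | 0 < x ∧ (x : EReal) < α} := by
  constructor
  · intro H
    exact monotone_of_jensen (J := {x : ℝ | 0 ≤ x ∧ (x : EReal) < α})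
      (I := {x : ℝ | 0 < x ∧ (x : EReal) < α}) (fun t ht => ⟨ht.1.le, ht.2⟩) (fun t ht => ht.1) H
  · intro H a c ha hsp hc
    have hne : Nonempty (Fin n) := ⟨⟨0, hn⟩⟩
    have hfin := Matrix.finite_real_spectrum (A := a)
    have hspne : (spectrum ℝ a).Nonempty := by
      rw [ha.1.spectrum_real_eq_range_eigenvalues]
      exact range_nonempty _
    -- The largest eigenvalue `b` of `a`, and some `b'` with `b < b' < α`.
    obtain ⟨b, hbm, hb⟩ := exists_max_image _ id hfin hspne
    obtain ⟨b', hb1, hb2⟩ := EReal.lt_iff_exists_real_btwn.1 (hsp hbm).2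
    have lt_of_le : ∀ t : ℝ, t ≤ b' → (t : EReal) < α := fun t ht =>
      lt_of_le_of_lt (EReal.coe_le_coe_iff.2 ht) hb2
    exact jensen_of_monotone (I := {x : ℝ | 0 < x ∧ (x : EReal) < α}) (hsp hbm).1 (EReal.coe_lt_coe_iff.1 hb1)
      (fun t h0 ht => ⟨h0, lt_of_le t ht⟩)
      (hfc.mono fun t ht => ⟨ht.1, lt_of_le t ht.2⟩) H ha hb hc
end

section
/- Let n ≥ 1, let 0 < α ≤ ∞, and let f : [0,α) → ℝ be continuous such that g(t) = f(t)/t is matrix monotone of order n on (0,α). Let a be an n×n positive definite Hermitian complex matrix with all eigenvalues in (0,α), and let c be an n×n complex matrix with c*c ≤ 1. Then c f(c*ac) c* ≤ c c* f(a) c c* in the Loewner order. -/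
/-!
Put `b = a^{1/2}`, `P = cc* + ε` and `X = bPb`. Since `cc* ≤ 1`, one has `0 < X ≤ (1+ε)a`, hence
`g(X) ≤ g((1+ε)a)` for small `ε > 0`. Conjugating by `X` itself gives
`f(X) X = X g(X) X ≤ X g((1+ε)a) X = (1+ε)⁻¹ bP f((1+ε)a) Pb`
(`perturbed_inequality`). Only `f`, which is continuous at `0`, appears in the outer terms, so one
may let `ε → 0` by continuity of the functional calculus on matrices with spectrum in a fixed
compact interval `[0, M]` (`tendsto_cfc_matrix`). With `u = bc` the limit of `X` is `uu*`, and the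
intertwining relation `f(uu*) u = u f(u*u)` (`cfc_intertwine`) identifies the limit on the left as
`b (c f(c*ac) c*) b`; the limit on the right is `b (cc* f(a) cc*) b`. Cancelling the invertible
matrix `b` gives the claim.
-/

open Matrix Set MeasureTheory
open scoped ComplexOrder

lemma continuousOn_spectrum {n : ℕ} (f : ℝ → ℝ) (A : Matrix (Fin n) (Fin n) ℂ) :
    ContinuousOn f (spectrum ℝ A) :=
  Matrix.finite_real_spectrum.continuousOn f

/-- Functional calculus respects intertwiners. On the finite set `spectrum A ∪ spectrum B` the
function `f` agrees with a Lagrange interpolation polynomial, for which the claim is algebraic. -/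
lemma cfc_intertwine_s7 {n : ℕ} (f : ℝ → ℝ) {A B u : Matrix (Fin n) (Fin n) ℂ}
    (hA : IsSelfAdjoint A) (hB : IsSelfAdjoint B) (h : A * u = u * B) :
    cfc f A * u = u * cfc f B := by
  classical
  have hfin : (spectrum ℝ A ∪ spectrum ℝ B).Finite :=
    Matrix.finite_real_spectrum.union Matrix.finite_real_spectrum
  set q : Polynomial ℝ := Lagrange.interpolate hfin.toFinset id f
  have hq : ∀ x ∈ spectrum ℝ A ∪ spectrum ℝ B, f x = q.eval x := fun x hx =>
    (Lagrange.eval_interpolate_at_node (v := id) f Function.injective_id.injOn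
      (hfin.mem_toFinset.mpr hx)).symm
  rw [cfc_congr (fun x hx => hq x (Or.inl hx) : (spectrum ℝ A).EqOn f q.eval),
    cfc_congr (fun x hx => hq x (Or.inr hx) : (spectrum ℝ B).EqOn f q.eval),
    cfc_polynomial q A hA, cfc_polynomial q B hB]
  clear_value q
  clear hq
  induction q using Polynomial.induction_on' with
  | add p r hp hr => simp only [map_add, add_mul, mul_add, hp, hr]
  | monomial k x =>
    have hk : A ^ k * u = u * B ^ k := ((show SemiconjBy u B A from h.symm).pow_right k).eq.symm
    rw [Polynomial.aeval_monomial, Polynomial.aeval_monomial, mul_assoc, hk, Algebra.left_comm]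

lemma cfc_div_mul_self {n : ℕ} (f : ℝ → ℝ) {A : Matrix (Fin n) (Fin n) ℂ} (hA : IsSelfAdjoint A)
    (hpos : ∀ x ∈ spectrum ℝ A, 0 < x) : cfc (fun t => f t / t) A * A = cfc f A := by
  conv_lhs => arg 2; rw [← cfc_id' ℝ A hA]
  rw [← cfc_mul _ _ A (continuousOn_spectrum _ _) (continuousOn_spectrum _ _)]
  exact cfc_congr fun x hx => div_mul_cancel₀ _ (hpos x hx).ne'

open scoped MatrixOrder Matrix.Norms.L2Operator in
lemma one_sub_mul_conjTranspose {n : ℕ} {c : Matrix (Fin n) (Fin n) ℂ}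
    (hc : (1 - cᴴ * c).PosSemidef) : (1 - c * cᴴ).PosSemidef := by
  rw [← Matrix.le_iff] at hc ⊢
  rw [← star_eq_conjTranspose] at hc ⊢
  have h1 := (CStarAlgebra.norm_le_one_iff_of_nonneg _ (star_mul_self_nonneg c)).mpr hc
  refine (CStarAlgebra.norm_le_one_iff_of_nonneg _ (mul_star_self_nonneg c)).mp ?_
  rwa [CStarRing.norm_self_mul_star, ← CStarRing.norm_star_mul_self]

open scoped MatrixOrder in
lemma spectrum_le_of_sub_posSemidef {n : ℕ} {X B : Matrix (Fin n) (Fin n) ℂ} {M : ℝ}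
    (hX : X.IsHermitian) (hB : B.IsHermitian) (hXB : (B - X).PosSemidef)
    (hM : ∀ x ∈ spectrum ℝ B, x ≤ M) : ∀ x ∈ spectrum ℝ X, x ≤ M := by
  have h : B ≤ algebraMap ℝ _ M := (le_algebraMap_iff_spectrum_le (ha := hB.isSelfAdjoint)).2 hM
  exact (le_algebraMap_iff_spectrum_le (ha := hX.isSelfAdjoint)).1 ((Matrix.le_iff.2 hXB).trans h)

lemma spectrum_smul_pos {n : ℕ} {a : Matrix (Fin n) (Fin n) ℂ} {r : ℝ} (hr : 0 < r) {y : ℝ}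
    (hy : y ∈ spectrum ℝ (r • a)) : ∃ x ∈ spectrum ℝ a, y = r * x := by
  have := spectrum.unit_smul_eq_smul a (Units.mk0 r hr.ne')
  open scoped Pointwise in
  have h2 : y ∈ (Units.mk0 r hr.ne') • spectrum ℝ a := by rw [← this]; exact hy
  obtain ⟨x, hx, rfl⟩ := h2
  exact ⟨x, hx, rfl⟩

open scoped MatrixOrder in
/-- The inequality before the limit `ε → 0`. Conjugating `g(X) ≤ g((1+ε)a)` by
`X = b(cc* + ε)b` turns `X g(X) X` into `f(X) X`, with no inverse of `cc* + ε` left to control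
as `ε → 0`. In the statement, `b` stands for `a^{1/2}`, so `a` is `b * b`. -/
lemma perturbed_inequality {n : ℕ} {α : EReal} {f : ℝ → ℝ}
    (hg : MatrixMonotoneOn n (fun t => f t / t) {x : ℝ | 0 < x ∧ (x : EReal) < α})
    {b c X : Matrix (Fin n) (Fin n) ℂ} (hb : b.IsHermitian) (hbu : IsUnit b)
    (hc : (1 - c * cᴴ).PosSemidef) {ε M : ℝ} (hε : 0 < ε) (hMα : (M : EReal) < α)
    (hpos : ∀ x ∈ spectrum ℝ (b * b), 0 < x)
    (hM : ∀ x ∈ spectrum ℝ (b * b), (1 + ε) * x ≤ M)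
    (hX : X = b * (c * cᴴ + ε • 1) * b) :
    X.IsHermitian ∧ (∀ x ∈ spectrum ℝ X, 0 < x ∧ x ≤ M) ∧
    (b * (c * cᴴ + ε • 1) * cfc f ((1 + ε) • (b * b)) * (c * cᴴ + ε • 1) * b
      - (1 + ε) • (cfc f X * X)).PosSemidef := by
  set P : Matrix (Fin n) (Fin n) ℂ := c * cᴴ + ε • 1 with hP
  set B : Matrix (Fin n) (Fin n) ℂ := (1 + ε) • (b * b) with hBdef
  have hε' : 0 < 1 + ε := by linarith
  have hPpd : P.PosDef := by
    refine Matrix.PosDef.posSemidef_add (Matrix.posSemidef_self_mul_conjTranspose c) ?_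
    exact Matrix.PosDef.one.smul hε
  have hXpd : X.PosDef := by
    have := hPpd.conjTranspose_mul_mul_same (B := b) (Matrix.mulVec_injective_of_isUnit hbu)
    rwa [hb.eq, ← hX] at this
  have hbb : (b * b).IsHermitian := by
    simp [Matrix.IsHermitian, Matrix.conjTranspose_mul, hb.eq]
  have hB : B.IsHermitian := by
    rw [Matrix.IsHermitian, hBdef, Matrix.conjTranspose_smul, hbb.eq]; simp
  have hBX : (B - X).PosSemidef := by
    have h := hc.conjTranspose_mul_mul_same b
    have e : B - X = bᴴ * (1 - c * cᴴ) * b := by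
      rw [hb.eq, hX, hBdef, hP]
      simp only [mul_add, add_mul, mul_sub, sub_mul, add_smul, mul_one, one_smul,
        Matrix.mul_smul, Matrix.smul_mul]
      abel
    rwa [e]
  have hBs : ∀ y ∈ spectrum ℝ B, 0 < y ∧ y ≤ M := by
    intro y hy
    obtain ⟨x, hx, rfl⟩ := spectrum_smul_pos hε' hy
    exact ⟨mul_pos hε' (hpos x hx), hM x hx⟩
  have hXs : ∀ x ∈ spectrum ℝ X, 0 < x ∧ x ≤ M := fun x hx =>
    ⟨hXpd.isStrictlyPositive.spectrum_pos hx,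
      spectrum_le_of_sub_posSemidef hXpd.isHermitian hB hBX (fun y hy => (hBs y hy).2) x hx⟩
  have hlt : ∀ y : ℝ, y ≤ M → (y : EReal) < α := fun y hy =>
    (EReal.coe_le_coe_iff.2 hy).trans_lt hMα
  refine ⟨hXpd.isHermitian, hXs, ?_⟩
  have h := hg X B hXpd.isHermitian hB (fun y hy => ⟨(hXs y hy).1, hlt y (hXs y hy).2⟩)
    (fun y hy => ⟨(hBs y hy).1, hlt y (hBs y hy).2⟩) hBX
  have h2 := (h.conjTranspose_mul_mul_same X).smul hε'.le
  rw [hXpd.isHermitian.eq] at h2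
  convert h2 using 1
  have hXg : X * cfc (fun t => f t / t) X = cfc f X := by
    rw [← cfc_div_mul_self f hXpd.isHermitian.isSelfAdjoint fun x hx => (hXs x hx).1]
    exact (cfc_intertwine_s7 _ hXpd.isHermitian.isSelfAdjoint hXpd.isHermitian.isSelfAdjoint rfl).symm
  have hbg : cfc (fun t => f t / t) B * b = b * cfc (fun t => f t / t) B := by
    refine cfc_intertwine_s7 _ hB.isSelfAdjoint hB.isSelfAdjoint ?_
    rw [hBdef, Matrix.smul_mul, Matrix.mul_smul, mul_assoc]
  have hBg : (1 + ε) • (b * cfc (fun t => f t / t) B * b) = cfc f B := by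
    rw [← hbg, mul_assoc, ← Matrix.mul_smul]
    exact cfc_div_mul_self f hB.isSelfAdjoint fun x hx => (hBs x hx).1
  rw [mul_sub, sub_mul, smul_sub, hXg, ← hBg]
  congr 1
  conv_rhs => rw [hX]
  simp only [Matrix.mul_smul, Matrix.smul_mul, mul_assoc]

open scoped Matrix.Norms.L2Operator Topology in
open Filter in
lemma tendsto_cfc_matrix {n : ℕ} {f : ℝ → ℝ} {s : Set ℝ} (hs : IsCompact s)
    (hf : ContinuousOn f s) {l : Filter ℝ} {A : ℝ → Matrix (Fin n) (Fin n) ℂ}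
    {A₀ : Matrix (Fin n) (Fin n) ℂ} (hA : Tendsto A l (𝓝 A₀))
    (h : ∀ᶠ x in l, spectrum ℝ (A x) ⊆ s) (h' : ∀ᶠ x in l, (A x).IsHermitian)
    (h₀ : spectrum ℝ A₀ ⊆ s) (h₀' : A₀.IsHermitian) :
    Tendsto (fun x => cfc f (A x)) l (𝓝 (cfc f A₀)) :=
  hA.cfc hs f h h' h₀ h₀' hf

open scoped MatrixOrder Matrix.Norms.L2Operator Topology in
open Filter in
lemma posSemidef_of_tendsto {n : ℕ} {l : Filter ℝ} [l.NeBot] {A : ℝ → Matrix (Fin n) (Fin n) ℂ}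
    {A₀ : Matrix (Fin n) (Fin n) ℂ} (hA : Tendsto A l (𝓝 A₀))
    (h : ∀ᶠ x in l, (A x).PosSemidef) : A₀.PosSemidef :=
  (ge_of_tendsto hA (h.mono fun _ hx => hx.nonneg)).posSemidef

open scoped MatrixOrder Topology
open Filter

/-- The key intermediate inequality in the proof of Theorem 3.1, (iii) ⇒ (ii): if
`g(t) = f(t)/t` is `n`-monotone on `(0,α)`, `a` is positive definite with eigenvalues in `(0,α)`
and `c` is a contraction, then `c f(c*ac) c* ≤ c c* f(a) c c*` in the Loewner order. -/
theorem stmt_7 (n : ℕ) (hn : 1 ≤ n) (α : EReal) (hα : 0 < α) (f : ℝ → ℝ)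
    (hfc : ContinuousOn f {x : ℝ | 0 ≤ x ∧ (x : EReal) < α})
    (hg : MatrixMonotoneOn n (fun t => f t / t) {x : ℝ | 0 < x ∧ (x : EReal) < α})
    (a c : Matrix (Fin n) (Fin n) ℂ) (ha : a.PosDef)
    (haspec : spectrum ℝ a ⊆ {x : ℝ | 0 < x ∧ (x : EReal) < α})
    (hc : (1 - cᴴ * c).PosSemidef) :
    (c * cᴴ * cfc f a * c * cᴴ - c * cfc f (cᴴ * a * c) * cᴴ).PosSemidef := by
  obtain ⟨b, hb, hab⟩ : ∃ b : Matrix (Fin n) (Fin n) ℂ, b.IsHermitian ∧ b * b = a :=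
    ⟨CFC.sqrt a, (CFC.sqrt_nonneg a).posSemidef.isHermitian,
      CFC.sqrt_mul_sqrt_self a ha.posSemidef.nonneg⟩
  subst hab
  have hbu : IsUnit b := by
    have := ha.isUnit
    rw [Matrix.isUnit_iff_isUnit_det, Matrix.det_mul] at this
    exact (Matrix.isUnit_iff_isUnit_det b).2 (isUnit_of_mul_isUnit_left this)
  have hc' := one_sub_mul_conjTranspose hc
  -- `M` lies strictly between the largest eigenvalue of `a` and `α`; it bounds the spectrum
  -- of `(1 + ε) a` for all small `ε`.
  obtain ⟨M, hMα, hM⟩ : ∃ M : ℝ, (M : EReal) < α ∧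
      ∀ᶠ ε : ℝ in 𝓝[>] 0, ∀ x ∈ spectrum ℝ (b * b), (1 + ε) * x ≤ M := by
    have hfin : (spectrum ℝ (b * b)).Finite := Matrix.finite_real_spectrum
    have hne : (spectrum ℝ (b * b)).Nonempty := by
      exact ⟨_, ha.isHermitian.eigenvalues_mem_spectrum_real ⟨0, hn⟩⟩
    obtain ⟨m, hm, hmax⟩ := hfin.exists_maximal hne
    obtain ⟨M, hmM, hMα⟩ := EReal.lt_iff_exists_real_btwn.1 (haspec hm).2
    refine ⟨M, hMα, ?_⟩
    have hcont : Tendsto (fun ε : ℝ => (1 + ε) * m) (𝓝[>] 0) (𝓝 ((1 + 0) * m)) :=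
      ((by fun_prop : Continuous fun ε : ℝ => (1 + ε) * m).tendsto 0).mono_left nhdsWithin_le_nhds
    rw [add_zero, one_mul] at hcont
    filter_upwards [hcont.eventually_lt_const (EReal.coe_lt_coe_iff.1 hmM), self_mem_nhdsWithin]
      with ε hε hε0 x hx
    have hxm : x ≤ m := (le_total x m).elim id fun h => hmax hx h
    have : (0 : ℝ) < ε := hε0
    exact (mul_le_mul_of_nonneg_left hxm (by linarith)).trans hε.le
  have hfM : ContinuousOn f (Set.Icc 0 M) :=
    hfc.mono fun x hx => ⟨hx.1, (EReal.coe_le_coe_iff.2 hx.2).trans_lt hMα⟩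
  set X : ℝ → Matrix (Fin n) (Fin n) ℂ := fun ε => b * (c * cᴴ + ε • 1) * b with hXdef
  have key : ∀ᶠ ε : ℝ in 𝓝[>] 0, (X ε).IsHermitian ∧ (∀ x ∈ spectrum ℝ (X ε), 0 < x ∧ x ≤ M) ∧
      (b * (c * cᴴ + ε • 1) * cfc f ((1 + ε) • (b * b)) * (c * cᴴ + ε • 1) * b
        - (1 + ε) • (cfc f (X ε) * X ε)).PosSemidef := by
    filter_upwards [hM, self_mem_nhdsWithin] with ε hε hε0
    exact perturbed_inequality hg hb hbu hc' hε0 hMα (fun x hx => (haspec hx).1) hε rfl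
  have haM : ∀ x ∈ spectrum ℝ (b * b), x ≤ M := by
    obtain ⟨ε, hε, hε0⟩ := (hM.and self_mem_nhdsWithin).exists
    intro x hx
    have h0 : 0 < ε * x := mul_pos hε0 (haspec hx).1
    linarith [hε x hx]
  have hX0 : X 0 = (b * c) * (b * c)ᴴ := by
    simp [hXdef, Matrix.conjTranspose_mul, hb.eq, mul_assoc]
  have hX0psd : (X 0).PosSemidef := hX0 ▸ Matrix.posSemidef_self_mul_conjTranspose _
  have hX0le : (b * b - X 0).PosSemidef := by
    have h := hc'.conjTranspose_mul_mul_same b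
    rw [hb.eq] at h
    convert h using 1
    simp [hXdef, mul_sub, sub_mul]
  have hX0spec : spectrum ℝ (X 0) ⊆ Set.Icc 0 M := fun x hx =>
    ⟨spectrum_nonneg_of_nonneg hX0psd.nonneg hx,
      spectrum_le_of_sub_posSemidef hX0psd.isHermitian ha.isHermitian hX0le haM x hx⟩
  have hXt : Tendsto X (𝓝[>] 0) (𝓝 (X 0)) :=
    ((by fun_prop : Continuous X).tendsto 0).mono_left nhdsWithin_le_nhds
  have hfX : Tendsto (fun ε => cfc f (X ε)) (𝓝[>] 0) (𝓝 (cfc f (X 0))) :=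
    tendsto_cfc_matrix isCompact_Icc hfM hXt
      (key.mono fun ε h x hx => ⟨(h.2.1 x hx).1.le, (h.2.1 x hx).2⟩) (key.mono fun ε h => h.1)
      hX0spec hX0psd.isHermitian
  have hBt : Tendsto (fun ε : ℝ => (1 + ε) • (b * b)) (𝓝[>] 0) (𝓝 (b * b)) := by
    have := ((by fun_prop : Continuous fun ε : ℝ => (1 + ε) • (b * b)).tendsto 0).mono_left
      (nhdsWithin_le_nhds (s := Set.Ioi 0))
    simpa using this
  have hfB : Tendsto (fun ε : ℝ => cfc f ((1 + ε) • (b * b))) (𝓝[>] 0) (𝓝 (cfc f (b * b))) := by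
    refine tendsto_cfc_matrix isCompact_Icc hfM hBt ?_ ?_
      (fun x hx => ⟨(haspec hx).1.le, haM x hx⟩) ha.isHermitian
    · filter_upwards [hM, self_mem_nhdsWithin] with ε hε hε0 y hy
      have h1 : 0 < 1 + ε := add_pos one_pos hε0
      obtain ⟨x, hx, rfl⟩ := spectrum_smul_pos h1 hy
      exact ⟨(mul_pos h1 (haspec hx).1).le, hε x hx⟩
    · refine Eventually.of_forall fun ε => ?_
      rw [Matrix.IsHermitian, Matrix.conjTranspose_smul, ha.isHermitian.eq]; simp
  have hPt : Tendsto (fun ε : ℝ => c * cᴴ + ε • (1 : Matrix (Fin n) (Fin n) ℂ)) (𝓝[>] 0)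
      (𝓝 (c * cᴴ)) := by
    have := ((by fun_prop : Continuous fun ε : ℝ =>
      c * cᴴ + ε • (1 : Matrix (Fin n) (Fin n) ℂ)).tendsto 0).mono_left
      (nhdsWithin_le_nhds (s := Set.Ioi 0))
    simpa using this
  have hst : Tendsto (fun ε : ℝ => 1 + ε) (𝓝[>] 0) (𝓝 1) := by
    have := ((by fun_prop : Continuous fun ε : ℝ => 1 + ε).tendsto 0).mono_left
      (nhdsWithin_le_nhds (s := Set.Ioi 0))
    simpa using this
  have hlim := posSemidef_of_tendsto
    (((((hPt.const_mul b).mul hfB).mul hPt).mul_const b).sub (hst.smul (hfX.mul hXt)))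
    (key.mono fun ε h => h.2.2)
  -- `f(uu*) u = u f(u*u)` for `u = bc`
  have hint : cfc f (X 0) * (b * c) = b * c * cfc f (cᴴ * (b * b) * c) := by
    refine cfc_intertwine_s7 f hX0psd.isHermitian.isSelfAdjoint
      (ha.posSemidef.conjTranspose_mul_mul_same c).isHermitian.isSelfAdjoint ?_
    simp [hX0, Matrix.conjTranspose_mul, hb.eq, mul_assoc]
  have hfX0 : cfc f (X 0) * X 0 = b * (c * cfc f (cᴴ * (b * b) * c) * cᴴ) * b := by
    calc cfc f (X 0) * X 0 = cfc f (X 0) * (b * c) * (b * c)ᴴ := by rw [mul_assoc, ← hX0]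
      _ = _ := by
        rw [hint]
        simp [Matrix.conjTranspose_mul, hb.eq, mul_assoc]
  rw [← hbu.posSemidef_star_left_conjugate_iff, star_eq_conjTranspose, hb.eq]
  convert hlim using 1
  rw [one_smul, hfX0]
  simp only [mul_sub, sub_mul, mul_assoc]
end

section
/- Let f : ℝ → ℝ be the polynomial f(t) = −t³ + 2t² − t. Then g(t) = f(t)/t = −(t−1)² is monotone increasing on the interval (0,1), but f is not convex on [0,1) (that is, f is not matrix convex of order 1 on [0,1)). -/
/-!
For `f t = -t³ + 2t² - t = -t (t - 1)²`, dividing by `t` leaves `-(t - 1)²`, which increases up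
to `t = 1`. On scalar matrices the functional calculus is evaluation of `f`, so matrix convexity
implies ordinary convexity (`MatrixConvexOn.scalar_le`), and this fails at the midpoint of
`7/10` and `9/10`: the average of the values is `-0.036`, whereas `f 0.8 = -0.032`.
-/

open Matrix Set MeasureTheory
open scoped ComplexOrder

/-- Evaluating matrix convexity of positive order at the scalar matrices `s • 1` and `t • 1`
gives the ordinary convexity inequality. -/
theorem MatrixConvexOn.scalar_le {n : ℕ} [NeZero n] {f : ℝ → ℝ} {I : Set ℝ}
    (h : MatrixConvexOn n f I) {s t : ℝ} (hs : s ∈ I) (ht : t ∈ I)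
    {l : ℝ} (hl0 : 0 ≤ l) (hl1 : l ≤ 1) :
    f (l * s + (1 - l) * t) ≤ l * f s + (1 - l) * f t := by
  have herm (r : ℝ) : (algebraMap ℝ (Matrix (Fin n) (Fin n) ℂ) r).IsHermitian :=
    IsSelfAdjoint.algebraMap _ (IsSelfAdjoint.all r)
  have hspec {r : ℝ} (hr : r ∈ I) :
      spectrum ℝ (algebraMap ℝ (Matrix (Fin n) (Fin n) ℂ) r) ⊆ I := by
    rw [spectrum.scalar_eq]
    exact singleton_subset_iff.mpr hr
  have key := h _ _ (herm s) (herm t) (hspec hs) (hspec ht) l hl0 hl1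
  have hsmul (a r : ℝ) : a • algebraMap ℝ (Matrix (Fin n) (Fin n) ℂ) r
      = algebraMap ℝ (Matrix (Fin n) (Fin n) ℂ) (a * r) := by
    rw [map_mul, Algebra.smul_def]
  simp only [hsmul, cfc_algebraMap, ← map_add, ← map_sub] at key
  have hdiag := key.diag_nonneg (i := 0)
  rw [Matrix.algebraMap_matrix_apply, if_pos rfl] at hdiag
  exact sub_nonneg.mp (Complex.zero_le_real.mp hdiag)

/-- Proposition 3.5 (counterexample part): for `f(t) = -t³ + 2t² - t`, the function
`g(t) = f(t)/t = -(t-1)²` is monotone increasing on `(0,1)`, but `f` is not convex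
(i.e. not matrix convex of order 1) on `[0,1)`. -/
theorem stmt_11 :
    (∀ t ∈ Ioo (0:ℝ) 1, (-t^3 + 2*t^2 - t) / t = -(t - 1)^2) ∧
    MonotoneOn (fun t : ℝ => (-t^3 + 2*t^2 - t) / t) (Ioo (0:ℝ) 1) ∧
    ¬ MatrixConvexOn 1 (fun t : ℝ => -t^3 + 2*t^2 - t) (Ico (0:ℝ) 1) := by
  have hg : ∀ t ∈ Ioo (0:ℝ) 1, (-t^3 + 2*t^2 - t) / t = -(t - 1)^2 := by
    intro t ht
    have := ht.1.ne'
    field_simp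
    ring
  refine ⟨hg, ?_, ?_⟩
  · intro s hs t ht hst
    simp only [hg s hs, hg t ht]
    nlinarith [hs.2, ht.2]
  · intro h
    -- `f'' t = 4 - 6 * t` is negative for `t > 2/3`, so a midpoint test in that range fails.
    have := h.scalar_le (s := 7/10) (t := 9/10) (l := 1/2)
      (by constructor <;> norm_num) (by constructor <;> norm_num) (by norm_num) (by norm_num)
    norm_num at this
end
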